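/- Let I be a monomial ideal in S = K[x₁,…,xₙ]. Then for all integers i₁, i₂ ≥ 0 and 0 ≤ k ≤ min{i₁, i₂}, t_{i₁+i₂−k}(S/I) ≤ t_{i₁}(S/I) + t_{i₂}(S/I). -/

import Mathlib

open Finsupp

noncomputable section

variable (K : Type) [Field K]

section Core
variable (P : Type) [Preorder P]

/-- Order chains with `n` elements of the poset `P`, written as strictly
decreasing tuples `(x₀ > x₁ > ⋯ > x_{n-1})`. -/
def OChain (n : ℕ) : Type := {c : Fin n → P // StrictAnti c}

/-- The chain group in "level" `n`: the `K`-vector space with basis the order chains with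
`n` elements.  Level `n` corresponds to homological degree `n - 1`; in particular
`CGrp K P 0 ≅ K` is the reduced part `C̃₋₁`. -/
abbrev CGrp (n : ℕ) : Type := OChain P n →₀ K

/-- Deletion of the `k`-th entry of an order chain. -/
def odel {n : ℕ} (k : Fin (n + 1)) (c : OChain P (n + 1)) : OChain P n :=
  ⟨c.1 ∘ k.succAbove, c.2.comp_strictMono (Fin.strictMono_succAbove k)⟩

/-- The simplicial boundary map (of the reduced simplicial chain complex of the order
complex), from level `n+1` to level `n`. -/
def cbdry (n : ℕ) : CGrp K P (n + 1) →ₗ[K] CGrp K P n :=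
  Finsupp.lsum K fun c => ∑ k : Fin (n + 1), ((-1 : K) ^ (k : ℕ)) • Finsupp.lsingle (odel P k c)

/-- The cycles in level `n` (every level-0 chain, i.e. multiple of the empty chain,
is a cycle). -/
def cyclesAt : (n : ℕ) → Submodule K (CGrp K P n)
  | 0 => ⊤
  | (n + 1) => LinearMap.ker (cbdry K P n)

/-- The boundaries in level `n`. -/
def boundariesIn (n : ℕ) : Submodule K (CGrp K P n) :=
  LinearMap.range (cbdry K P n)

/-- `H̃_{n-1}(P) ≠ 0`: nontriviality of the reduced simplicial homology (with coefficients
in `K`) of the order complex of `P` in degree `n - 1` (level `n`). -/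
def RHomNontrivial (n : ℕ) : Prop := ¬ cyclesAt K P n ≤ boundariesIn K P n

end Core


section Monomial

variable (nv : ℕ)

/-- The polynomial ring `S = K[x₁, …, xₙ]`. -/
abbrev PolyS : Type := MvPolynomial (Fin nv) K

/-- The monomial `x^d` attached to an exponent vector `d`. -/
def monOf (d : Fin nv → ℕ) : PolyS K nv :=
  MvPolynomial.monomial (Finsupp.equivFunOnFinite.symm d) 1

/-- `I` is a monomial ideal: it is generated by monomials. -/
def IsMonomialIdeal (I : Ideal (PolyS K nv)) : Prop :=
  ∃ G : Set (Fin nv → ℕ), I = Ideal.span (monOf K nv '' G)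

/-- The minimal monomial generating set `G(I)` of a monomial ideal: exponent vectors of
the monomials of `I` that are minimal with respect to divisibility. -/
def minGens (I : Ideal (PolyS K nv)) : Set (Fin nv → ℕ) :=
  {d | monOf K nv d ∈ I ∧ ∀ d' < d, monOf K nv d' ∉ I}

/-- The underlying set of the LCM-lattice of a monomial ideal: all least common multiples
(= pointwise suprema of exponent vectors) of subsets of the minimal generators, ordered by
divisibility (= the pointwise order).  The empty subset contributes `lcm ∅ = 1`, i.e. the
zero exponent vector. -/
def lcmSet (I : Ideal (PolyS K nv)) : Set (Fin nv → ℕ) :=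
  {m | ∃ B : Finset (Fin nv → ℕ), ↑B ⊆ minGens K nv I ∧ m = B.sup id}

/-- The open interval `(1, m)` in the LCM-lattice of `I`. -/
def openInt (I : Ideal (PolyS K nv)) (m : Fin nv → ℕ) : Set (Fin nv → ℕ) :=
  {p | p ∈ lcmSet K nv I ∧ 0 < p ∧ p < m}

/-- Total degree of a monomial given by its exponent vector. -/
def degTot (m : Fin nv → ℕ) : ℕ := ∑ r, m r

open Classical in
/-- The multigraded Betti number `β_{i,m}(S/I) = dim_K Tor_i^S(S/I, K)_m` of a monomial
ideal, via the Gasharov–Peeva–Welker formula: for `i ≥ 1` and `m` in the LCM-lattice,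
`β_{i,m}(S/I) = dim_K H̃_{i-2}((1, m))` (reduced homology of the order complex of the open
interval in the LCM-lattice; degree `i-2` is level `i-1`; the dimension of the homology is
the dimension of the cycles minus the dimension of the boundaries); moreover `β_{0,m} = 1` iff
`m = 1`, and `β_{i,m} = 0` for `m` outside the LCM-lattice. -/
noncomputable def multiBetti (I : Ideal (PolyS K nv)) (i : ℕ) (m : Fin nv → ℕ) : ℕ :=
  if i = 0 then (if m = 0 then 1 else 0)
  else if m ∈ lcmSet K nv I ∧ m ≠ 0 then
    Module.finrank K ↥(cyclesAt K ↥(openInt K nv I m) (i - 1)) -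
      Module.finrank K ↥(boundariesIn K ↥(openInt K nv I m) (i - 1))
  else 0

/-- The graded Betti number `β_{i,j}(S/I) = dim_K Tor_i^S(S/I, K)_j`: the sum of the
multigraded Betti numbers over the multidegrees of total degree `j`. -/
noncomputable def betti (I : Ideal (PolyS K nv)) (i j : ℕ) : ℕ :=
  ∑ᶠ m ∈ {m : Fin nv → ℕ | degTot nv m = j}, multiBetti K nv I i m

/-- The maximal shift `t_i(S/I) = max { j : β_{i,j}(S/I) ≠ 0 }`, with `t_i(S/I) = 0`
if `β_{i,j}(S/I) = 0` for all `j` (the supremum over the empty set of naturals is `0`). -/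
noncomputable def tshift (I : Ideal (PolyS K nv)) (i : ℕ) : ℕ :=
  sSup {j | betti K nv I i j ≠ 0}

/-- `a_i(S/I)`: the number of multidegrees `m` with `β_{i,m}(S/I) ≠ 0`. -/
noncomputable def acount (I : Ideal (PolyS K nv)) (i : ℕ) : ℕ :=
  {m : Fin nv → ℕ | multiBetti K nv I i m ≠ 0}.ncard

end Monomial

section ListChains

variable {L : Type*}

/-- Prepending `y` to every list. -/
def listCone (y : L) : (List L →₀ K) →ₗ[K] (List L →₀ K) :=
  Finsupp.lmapDomain K K (List.cons y)

/-- The alternating sum of the lists obtained by deleting one entry. -/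
def listBdrySingle : List L → (List L →₀ K)
  | [] => 0
  | y :: l => Finsupp.single l 1 - listCone K y (listBdrySingle l)

/-- The simplicial boundary on formal combinations of lists. -/
def listBdry : (List L →₀ K) →ₗ[K] (List L →₀ K) :=
  Finsupp.linearCombination K (listBdrySingle K)

/-- The part of a formal combination of lists with head `y`, with the head removed. -/
def listTail (y : L) : (List L →₀ K) →ₗ[K] (List L →₀ K) :=
  Finsupp.lcomapDomain (List.cons y) (List.cons_injective)

@[simp] lemma listCone_single (y : L) (l : List L) (a : K) :
    listCone K y (Finsupp.single l a) = Finsupp.single (y :: l) a := by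
  simp [listCone]

lemma listBdry_nil (a : K) : listBdry K (Finsupp.single ([] : List L) a) = 0 := by
  simp [listBdry, listBdrySingle]

lemma listBdry_listCone (y : L) (c : List L →₀ K) :
    listBdry K (listCone K y c) = c - listCone K y (listBdry K c) := by
  induction c using Finsupp.induction_linear with
  | zero => simp
  | add f g hf hg => simp only [map_add, hf, hg]; abel
  | single l a =>
    simp [listBdry, listBdrySingle, smul_sub]

lemma listBdry_listBdry (c : List L →₀ K) : listBdry K (listBdry K c) = 0 := by
  induction c using Finsupp.induction_linear with
  | zero => simp
  | add f g hf hg => simp only [map_add, hf, hg, add_zero]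
  | single l a =>
    induction l with
    | nil => simp [listBdry_nil]
    | cons y l ih =>
      rw [← listCone_single, listBdry_listCone, map_sub, listBdry_listCone, ih]
      simp

lemma listTail_apply (y : L) (c : List L →₀ K) (l : List L) :
    listTail K y c l = c (y :: l) := rfl

lemma listCone_apply_cons (y : L) (c : List L →₀ K) (l : List L) :
    listCone K y c (y :: l) = c l :=
  Finsupp.mapDomain_apply List.cons_injective _ _

lemma listTail_listCone (y : L) (c : List L →₀ K) : listTail K y (listCone K y c) = c := by
  ext l
  rw [listTail_apply, listCone_apply_cons]

lemma listTail_listCone_of_ne {y y' : L} (h : y ≠ y') (c : List L →₀ K) :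
    listTail K y (listCone K y' c) = 0 := by
  ext l
  rw [listTail_apply]
  refine Finsupp.mapDomain_of_notMem_range _ _ ?_
  rintro ⟨l', hl'⟩
  exact h (List.cons.inj hl').1.symm

/-- Combinations of lists with all entries in `U`. -/
def listsIn (U : Set L) : Submodule K (List L →₀ K) :=
  Finsupp.supported K K {l | ∀ a ∈ l, a ∈ U}

lemma listsIn_mono {U V : Set L} (h : U ⊆ V) : listsIn K U ≤ listsIn K V :=
  Finsupp.supported_mono fun _ hl a ha => h (hl a ha)

lemma listCone_mem_supported {S T : Set (List L)} {y : L} (h : ∀ l ∈ S, y :: l ∈ T)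
    {c : List L →₀ K} (hc : c ∈ Finsupp.supported K K S) :
    listCone K y c ∈ Finsupp.supported K K T := by
  rw [Finsupp.supported_eq_span_single] at hc
  induction hc using Submodule.span_induction with
  | mem x hx =>
    obtain ⟨l, hl, rfl⟩ := hx
    rw [listCone_single]
    exact Finsupp.single_mem_supported K _ (h l hl)
  | zero => simp
  | add x y _ _ hx hy => rw [map_add]; exact add_mem hx hy
  | smul a x _ hx => rw [map_smul]; exact Submodule.smul_mem _ _ hx

lemma listBdry_mem_supported {S T : Set (List L)}
    (h : ∀ l ∈ S, listBdrySingle K l ∈ Finsupp.supported K K T)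
    {c : List L →₀ K} (hc : c ∈ Finsupp.supported K K S) :
    listBdry K c ∈ Finsupp.supported K K T := by
  rw [Finsupp.supported_eq_span_single] at hc
  induction hc using Submodule.span_induction with
  | mem x hx =>
    obtain ⟨l, hl, rfl⟩ := hx
    simpa [listBdry] using h l hl
  | zero => simp
  | add x y _ _ hx hy => rw [map_add]; exact add_mem hx hy
  | smul a x _ hx => rw [map_smul]; exact Submodule.smul_mem _ _ hx

lemma listTail_mem_supported {S T : Set (List L)} {y : L} (h : ∀ l, y :: l ∈ S → l ∈ T)
    {c : List L →₀ K} (hc : c ∈ Finsupp.supported K K S) :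
    listTail K y c ∈ Finsupp.supported K K T := by
  rw [Finsupp.mem_supported'] at hc ⊢
  intro l hl
  exact hc _ fun h' => hl (h l h')

end ListChains

section Minimal

variable {L : Type*} [PartialOrder L]

lemma exists_relative_complement {V : Type*} [AddCommGroup V] [Module K V]
    (N Z : Submodule K V) (h : N ≤ Z) : ∃ W : Submodule K V, N ⊔ W = Z ∧ Disjoint N W := by
  obtain ⟨C, hC⟩ := exists_isCompl N
  refine ⟨C ⊓ Z, ?_, hC.disjoint.mono_right inf_le_left⟩
  rw [← sup_inf_assoc_of_le C h, hC.sup_eq_top, top_inf_eq]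

lemma listCone_mem_listsIn {y : L} {U : Set L} (hU : Set.Iic y ⊆ U) {c : List L →₀ K}
    (hc : c ∈ listsIn K (Set.Iio y)) : listCone K y c ∈ listsIn K U := by
  refine listCone_mem_supported K (S := {l | ∀ a ∈ l, a ∈ Set.Iio y})
    (T := {l | ∀ a ∈ l, a ∈ U}) (fun l hl a ha => hU ?_) hc
  rcases List.mem_cons.1 ha with rfl | ha
  · exact Set.mem_Iic.2 le_rfl
  · exact (hl a ha).le

variable [OrderBot L]

/-- The cycles of `G` supported below `y`. -/
def cyclesBelow (G : Submodule K (List L →₀ K)) (y : L) : Submodule K (List L →₀ K) :=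
  G ⊓ listsIn K (Set.Iio y) ⊓ LinearMap.ker (listBdry K)

/-- The span of the cycles of `G` supported below some nonzero element below `y`. -/
def decomposableCycles (G : Submodule K (List L →₀ K)) (y : L) : Submodule K (List L →₀ K) :=
  ⨆ y' ∈ Set.Ioo ⊥ y, cyclesBelow K G y'

lemma decomposableCycles_le (G : Submodule K (List L →₀ K)) (y : L) :
    decomposableCycles K G y ≤ cyclesBelow K G y := by
  refine iSup₂_le fun y' hy' => ?_
  exact inf_le_inf_right _ (inf_le_inf_left _ (listsIn_mono K fun a ha => lt_trans ha hy'.2))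

/-- A complement of the decomposable cycles below `y`. -/
def newCycles (G : Submodule K (List L →₀ K)) (y : L) : Submodule K (List L →₀ K) :=
  (exists_relative_complement K _ _ (decomposableCycles_le K G y)).choose

lemma decomposable_sup_new (G : Submodule K (List L →₀ K)) (y : L) :
    decomposableCycles K G y ⊔ newCycles K G y = cyclesBelow K G y :=
  (exists_relative_complement K _ _ (decomposableCycles_le K G y)).choose_spec.1

lemma disjoint_decomposable_new (G : Submodule K (List L →₀ K)) (y : L) :
    Disjoint (decomposableCycles K G y) (newCycles K G y) :=
  (exists_relative_complement K _ _ (decomposableCycles_le K G y)).choose_spec.2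

lemma newCycles_le (G : Submodule K (List L →₀ K)) (y : L) :
    newCycles K G y ≤ cyclesBelow K G y :=
  le_sup_right.trans (decomposable_sup_new K G y).le

variable (L) in
/-- The minimal model of the chain complex of order chains: in degree `q + 1` it is spanned by
the cones `y * w` with `w` a new cycle of degree `q` below `y`. -/
def minModel : ℕ → Submodule K (List L →₀ K)
  | 0 => Submodule.span K {Finsupp.single [] 1}
  | q + 1 => ⨆ y ∈ Set.Ioi (⊥ : L), (newCycles K (minModel q) y).map (listCone K y)

/-- Lists of length `q` that are order chains in `U` without `⊥`. -/
def chainLists (U : Set L) (q : ℕ) : Set (List L) :=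
  {l | l.length = q ∧ l.Pairwise (· > ·) ∧ ∀ a ∈ l, ⊥ < a ∧ a ∈ U}

/-- Combinations of order chains in `U` with `q` elements. -/
def chainsIn (U : Set L) (q : ℕ) : Submodule K (List L →₀ K) :=
  Finsupp.supported K K (chainLists U q)

lemma chainsIn_mono {U V : Set L} (h : U ⊆ V) (q : ℕ) : chainsIn K U q ≤ chainsIn K V q :=
  Finsupp.supported_mono fun _ hl =>
    ⟨hl.1, hl.2.1, fun a ha => ⟨(hl.2.2 a ha).1, h (hl.2.2 a ha).2⟩⟩

lemma chainsIn_univ_inf (U : Set L) (q : ℕ) :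
    chainsIn K Set.univ q ⊓ listsIn K U ≤ chainsIn K U q := by
  rw [chainsIn, listsIn, chainsIn, ← Finsupp.supported_inter]
  exact Finsupp.supported_mono fun l hl =>
    ⟨hl.1.1, hl.1.2.1, fun a ha => ⟨(hl.1.2.2 a ha).1, hl.2 a ha⟩⟩

lemma listCone_mem_chainsIn {U V : Set L} {q : ℕ} {y : L} (hy : ⊥ < y) (hyV : y ∈ V)
    (hUV : U ⊆ V) (hU : ∀ a ∈ U, a < y) {c : List L →₀ K} (hc : c ∈ chainsIn K U q) :
    listCone K y c ∈ chainsIn K V (q + 1) := by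
  refine listCone_mem_supported K (S := chainLists U q)
    (T := chainLists V (q + 1)) (fun l hl => ⟨by simp [hl.1], ?_, ?_⟩) hc
  · exact List.pairwise_cons.2 ⟨fun a ha => hU a (hl.2.2 a ha).2, hl.2.1⟩
  · intro a ha
    rcases List.mem_cons.1 ha with rfl | ha
    · exact ⟨hy, hyV⟩
    · exact ⟨(hl.2.2 a ha).1, hUV (hl.2.2 a ha).2⟩

lemma listBdrySingle_mem (U : Set L) (q : ℕ) (l : List L) (hl : l ∈ chainLists U (q + 1)) :
    listBdrySingle K l ∈ chainsIn K U q := by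
  induction l generalizing q U with
  | nil => simp [chainLists] at hl
  | cons y l ih =>
    obtain ⟨h1, h2, h3⟩ := hl
    rw [List.pairwise_cons] at h2
    have hl' : ∀ a ∈ l, ⊥ < a ∧ a ∈ U ∩ Set.Iio y := fun a ha =>
      ⟨(h3 a (List.mem_cons_of_mem _ ha)).1, (h3 a (List.mem_cons_of_mem _ ha)).2, h2.1 a ha⟩
    have hlen : l.length = q := by simpa using h1
    rw [listBdrySingle]
    refine sub_mem (Finsupp.single_mem_supported K _ ⟨hlen, h2.2, fun a ha =>
      ⟨(hl' a ha).1, (hl' a ha).2.1⟩⟩) ?_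
    cases q with
    | zero =>
      rw [List.length_eq_zero_iff] at hlen
      subst hlen
      simp [listBdrySingle]
    | succ q =>
      exact listCone_mem_chainsIn K (h3 y (by simp)).1 (h3 y (by simp)).2 Set.inter_subset_left
        (fun a ha => ha.2) (ih _ q ⟨hlen, h2.2, hl'⟩)

lemma listBdry_mem_chainsIn {U : Set L} {q : ℕ} {c : List L →₀ K}
    (hc : c ∈ chainsIn K U (q + 1)) : listBdry K c ∈ chainsIn K U q :=
  listBdry_mem_supported K (listBdrySingle_mem K U q) hc

lemma minModel_le_chainsIn (q : ℕ) : minModel K L q ≤ chainsIn K Set.univ q := by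
  induction q with
  | zero =>
    rw [minModel, Submodule.span_le, Set.singleton_subset_iff]
    exact Finsupp.single_mem_supported K _ ⟨rfl, List.Pairwise.nil, by simp⟩
  | succ q ih =>
    refine iSup₂_le fun y hy => ?_
    rintro _ ⟨w, hw, rfl⟩
    have hw' := (newCycles_le K _ y hw).1
    exact listCone_mem_chainsIn K hy (Set.mem_univ y) (Set.subset_univ _) (fun a ha => ha)
      (chainsIn_univ_inf K _ q ⟨ih hw'.1, hw'.2⟩)

lemma minModel_inf_le_chainsIn (U : Set L) (q : ℕ) :
    minModel K L q ⊓ listsIn K U ≤ chainsIn K U q :=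
  (inf_le_inf_right _ (minModel_le_chainsIn K q)).trans (chainsIn_univ_inf K U q)

lemma single_nil_mem_minModel : Finsupp.single ([] : List L) (1 : K) ∈ minModel K L 0 :=
  Submodule.mem_span_singleton_self _

lemma minModel_zero_le_listsIn (U : Set L) : minModel K L 0 ≤ listsIn K U := by
  rw [minModel, Submodule.span_le, Set.singleton_subset_iff]
  exact Finsupp.single_mem_supported K _ (by simp)

lemma listTail_mem_newCycles {q : ℕ} {c : List L →₀ K} (hc : c ∈ minModel K L (q + 1)) (y : L) :
    listTail K y c ∈ newCycles K (minModel K L q) y := by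
  suffices h : minModel K L (q + 1) ≤ (newCycles K (minModel K L q) y).comap (listTail K y) from
    h hc
  refine iSup₂_le fun y' _ => ?_
  rintro _ ⟨w, hw, rfl⟩
  rw [Submodule.mem_comap]
  by_cases h : y = y'
  · subst h
    rwa [listTail_listCone]
  · rw [listTail_listCone_of_ne K h]
    exact zero_mem _

lemma listTail_eq_zero {q : ℕ} {c : List L →₀ K} {U : Set L} (hc : c ∈ chainsIn K U q) {y : L}
    (hy : ¬ (⊥ < y ∧ y ∈ U)) : listTail K y c = 0 := by
  ext l
  rw [listTail_apply]
  rw [chainsIn, Finsupp.mem_supported'] at hc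
  exact hc _ fun h => hy (h.2.2 y (by simp))

lemma sum_listCone_listTail [Fintype L] {q : ℕ} {U : Set L} {c : List L →₀ K}
    (hc : c ∈ chainsIn K U (q + 1)) :
    ∑ y, listCone K y (listTail K y c) = c := by
  classical
  ext l
  rw [Finsupp.finsetSum_apply]
  cases l with
  | nil =>
    rw [chainsIn, Finsupp.mem_supported'] at hc
    rw [hc _ (by simp [chainLists])]
    refine Finset.sum_eq_zero fun y _ => Finsupp.mapDomain_of_notMem_range _ _ ?_
    simp
  | cons x l =>
    rw [Finset.sum_eq_single x]
    · rw [listCone_apply_cons, listTail_apply]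
    · intro y _ hy
      refine Finsupp.mapDomain_of_notMem_range _ _ ?_
      rintro ⟨l', hl'⟩
      exact hy (List.cons.inj hl').1
    · simp

lemma listBdry_of_mem_newCycles {G : Submodule K (List L →₀ K)} {y : L} {w : List L →₀ K}
    (hw : w ∈ newCycles K G y) : listBdry K w = 0 :=
  (newCycles_le K _ y hw).2

lemma listBdry_listCone_newCycles {G : Submodule K (List L →₀ K)} {y : L} {w : List L →₀ K}
    (hw : w ∈ newCycles K G y) : listBdry K (listCone K y w) = w := by
  rw [listBdry_listCone, listBdry_of_mem_newCycles K hw, map_zero, sub_zero]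

lemma listCone_mem_minModel {q : ℕ} {y : L} (hy : ⊥ < y) {w : List L →₀ K}
    (hw : w ∈ newCycles K (minModel K L q) y) : listCone K y w ∈ minModel K L (q + 1) :=
  Submodule.mem_iSup_of_mem y (Submodule.mem_iSup_of_mem hy (Submodule.mem_map_of_mem hw))

lemma listBdry_minModel [Fintype L] {q : ℕ} {c : List L →₀ K} (hc : c ∈ minModel K L (q + 1)) :
    listBdry K c = ∑ y, listTail K y c := by
  conv_lhs => rw [← sum_listCone_listTail K (minModel_le_chainsIn K _ hc), map_sum]
  exact Finset.sum_congr rfl fun y _ =>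
    listBdry_listCone_newCycles K (listTail_mem_newCycles K hc y)

lemma listTail_mem_decomposable {q : ℕ} {c : List L →₀ K} {x y : L} {U : Set L}
    (hU : ∀ a ∈ U, a ≤ x)
    (hc : c ∈ minModel K L (q + 1)) (hcU : c ∈ listsIn K U) (hyx : y ≠ x) :
    listTail K y c ∈ decomposableCycles K (minModel K L q) x := by
  by_cases hy : ⊥ < y ∧ y ∈ U
  · have hyx' : y < x := lt_of_le_of_ne (hU y hy.2) hyx
    exact Submodule.mem_iSup_of_mem y (Submodule.mem_iSup_of_mem ⟨hy.1, hyx'⟩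
      (newCycles_le K _ y (listTail_mem_newCycles K hc y)))
  · rw [listTail_eq_zero K (minModel_inf_le_chainsIn K U _ ⟨hc, hcU⟩) hy]
    exact zero_mem _

lemma listBdry_mem_decomposable [Fintype L] {q : ℕ} {c : List L →₀ K} {x : L}
    (hc : c ∈ minModel K L (q + 1)) (hcx : c ∈ listsIn K (Set.Iio x)) :
    listBdry K c ∈ decomposableCycles K (minModel K L q) x := by
  rw [listBdry_minModel K hc]
  refine Submodule.sum_mem _ fun y _ => ?_
  by_cases hyx : y = x
  · subst hyx
    rw [listTail_eq_zero K (minModel_inf_le_chainsIn K _ _ ⟨hc, hcx⟩) (by simp)]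
    exact zero_mem _
  · exact listTail_mem_decomposable K (fun a ha => le_of_lt ha) hc hcx hyx

lemma cycle_mem_listsIn_Iio [Fintype L] {q : ℕ} {c : List L →₀ K} {x : L}
    (hc : c ∈ minModel K L q) (hcx : c ∈ listsIn K (Set.Iic x)) (hd : listBdry K c = 0) :
    c ∈ listsIn K (Set.Iio x) := by
  classical
  cases q with
  | zero => exact minModel_zero_le_listsIn K _ hc
  | succ q =>
    have hsum := listBdry_minModel K hc
    rw [hd, ← Finset.add_sum_erase _ _ (Finset.mem_univ x)] at hsum
    have htail : listTail K x c = 0 := by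
      refine (Submodule.disjoint_def.1 (disjoint_decomposable_new K (minModel K L q) x)) _ ?_
        (listTail_mem_newCycles K hc x)
      rw [eq_neg_of_add_eq_zero_left hsum.symm]
      refine neg_mem (Submodule.sum_mem _ fun y hy => ?_)
      exact listTail_mem_decomposable K (fun a ha => ha) hc hcx (Finset.ne_of_mem_erase hy)
    rw [← sum_listCone_listTail K (minModel_le_chainsIn K _ hc)]
    refine Submodule.sum_mem _ fun y _ => ?_
    by_cases hy : y < x
    · exact listCone_mem_listsIn K (fun a ha => lt_of_le_of_lt ha hy)
        (newCycles_le K _ y (listTail_mem_newCycles K hc y)).1.2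
    · have : listTail K y c = 0 := by
        by_cases hyx : y = x
        · rw [hyx, htail]
        · refine listTail_eq_zero K (minModel_inf_le_chainsIn K _ _ ⟨hc, hcx⟩) fun h => hy ?_
          exact lt_of_le_of_ne h.2 hyx
      rw [this, map_zero]
      exact zero_mem _

lemma decomposableCycles_le_map (q : ℕ) (x : L)
    (h : ∀ y, ⊥ < y → y < x → cyclesBelow K (minModel K L q) y ≤
      (minModel K L (q + 1) ⊓ listsIn K (Set.Iic y)).map (listBdry K)) :
    decomposableCycles K (minModel K L q) x ≤
      (minModel K L (q + 1) ⊓ listsIn K (Set.Iio x)).map (listBdry K) := by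
  refine iSup₂_le fun y hy => (h y hy.1 hy.2).trans (Submodule.map_mono (inf_le_inf_left _ ?_))
  exact listsIn_mono K fun a ha => lt_of_le_of_lt ha hy.2

lemma cyclesBelow_le_map [Finite L] (q : ℕ) (x : L) (hx : ⊥ < x) :
    cyclesBelow K (minModel K L q) x ≤
      (minModel K L (q + 1) ⊓ listsIn K (Set.Iic x)).map (listBdry K) := by
  induction x using WellFoundedLT.induction with
  | ind x ih =>
    rw [← decomposable_sup_new]
    refine sup_le ((decomposableCycles_le_map K q x fun y hy hyx => ih y hyx hy).trans
      (Submodule.map_mono (inf_le_inf_left _ (listsIn_mono K fun a ha => le_of_lt ha)))) ?_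
    intro w hw
    exact ⟨listCone K x w, ⟨listCone_mem_minModel K hx hw,
      listCone_mem_listsIn K subset_rfl (newCycles_le K _ x hw).1.2⟩,
      listBdry_listCone_newCycles K hw⟩

lemma decomposable_le_map_Iio [Finite L] (q : ℕ) (x : L) :
    decomposableCycles K (minModel K L q) x ≤
      (minModel K L (q + 1) ⊓ listsIn K (Set.Iio x)).map (listBdry K) :=
  decomposableCycles_le_map K q x fun y hy _ => cyclesBelow_le_map K q y hy

/-- The minimal model is exact below every nonzero element. -/
lemma minModel_exact [Finite L] {q : ℕ} {x : L} (hx : ⊥ < x) {c : List L →₀ K}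
    (hc : c ∈ minModel K L q) (hcx : c ∈ listsIn K (Set.Iic x)) (hd : listBdry K c = 0) :
    ∃ u ∈ minModel K L (q + 1) ⊓ listsIn K (Set.Iic x), listBdry K u = c := by
  have := Fintype.ofFinite L
  exact cyclesBelow_le_map K q x hx ⟨⟨hc, cycle_mem_listsIn_Iio K hc hcx hd⟩, hd⟩

/-- The inclusion of the minimal model into all order chains is a quasi-isomorphism over every
lower set. -/
lemma minModel_quasiIso [Finite L] (U : Finset L) (hU : IsLowerSet (U : Set L)) (q : ℕ)
    (c : List L →₀ K) (hc : c ∈ chainsIn K (U : Set L) q)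
    (hd : listBdry K c ∈ minModel K L (q - 1)) :
    ∃ f ∈ minModel K L q ⊓ listsIn K (U : Set L), ∃ u ∈ chainsIn K (U : Set L) (q + 1),
      c = f + listBdry K u := by
  classical
  have := Fintype.ofFinite L
  induction hn : U.card using Nat.strong_induction_on generalizing U q c with
  | _ n ih =>
  subst hn
  cases q with
  | zero =>
    refine ⟨c, ⟨?_, ?_⟩, 0, zero_mem _, by simp⟩
    · refine Submodule.mem_span_singleton.2 ⟨c [], ?_⟩
      ext l
      cases l with
      | nil => simp
      | cons y l =>
        rw [chainsIn, Finsupp.mem_supported'] at hc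
        rw [hc (y :: l) (by simp [chainLists])]
        simp
    · exact Finsupp.supported_mono (fun l hl a ha => (hl.2.2 a ha).2) hc
  | succ q =>
    rw [Nat.add_sub_cancel] at hd
    rcases U.eq_empty_or_nonempty with rfl | hne
    · have : c = 0 := by
        ext l
        rw [chainsIn, Finsupp.mem_supported'] at hc
        refine hc l fun hl => ?_
        obtain ⟨h1, _, h3⟩ := hl
        cases l with
        | nil => simp at h1
        | cons y l => simpa using (h3 y (by simp)).2
      exact ⟨0, zero_mem _, 0, zero_mem _, by simp [this]⟩
    obtain ⟨y, hyU, hymax⟩ := U.exists_maximal hne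
    have hUe : IsLowerSet ((U.erase y : Finset L) : Set L) := by
      intro a b hba ha
      rw [Finset.mem_coe, Finset.mem_erase] at ha ⊢
      refine ⟨?_, hU hba ha.2⟩
      rintro rfl
      exact ha.1 (le_antisymm (hymax ha.2 hba) hba)
    have hcard : (U.erase y).card < U.card := Finset.card_erase_lt_of_mem hyU
    have hIio : (Finset.univ.filter (· < y)) ⊆ U.erase y := by
      intro a ha
      rw [Finset.mem_filter] at ha
      exact Finset.mem_erase.2 ⟨ha.2.ne, hU ha.2.le hyU⟩
    have hIio' : ((Finset.univ.filter (· < y) : Finset L) : Set L) = Set.Iio y := by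
      ext; simp
    have hsub : Set.Iio y ⊆ ((U.erase y : Finset L) : Set L) := by
      rw [← hIio']; exact_mod_cast hIio
    have hsubU : ((U.erase y : Finset L) : Set L) ⊆ U := by
      exact_mod_cast Finset.erase_subset y U
    set b := listTail K y c with hb
    have hbc : b ∈ chainsIn K (Set.Iio y) q := by
      refine listTail_mem_supported K (S := chainLists (U : Set L) (q + 1)) (fun l hl => ?_) hc
      obtain ⟨h1, h2, h3⟩ := hl
      rw [List.pairwise_cons] at h2
      exact ⟨by simpa using h1, h2.2, fun a ha => ⟨(h3 a (by simp [ha])).1, h2.1 a ha⟩⟩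
    by_cases hybot : ⊥ < y
    swap
    · have hce : c ∈ chainsIn K ((U.erase y : Finset L) : Set L) (q + 1) := by
        refine Finsupp.supported_mono (s := chainLists (U : Set L) (q + 1))
          (t := chainLists ((U.erase y : Finset L) : Set L) (q + 1))
          (fun l hl => ⟨hl.1, hl.2.1, fun a ha => ⟨(hl.2.2 a ha).1, ?_⟩⟩) hc
        refine Finset.mem_coe.2 (Finset.mem_erase.2 ⟨?_, (hl.2.2 a ha).2⟩)
        rintro rfl
        exact hybot (hl.2.2 a ha).1
      obtain ⟨f, hf, u, hu, hcu⟩ := ih _ hcard _ hUe (q + 1) c hce hd rfl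
      exact ⟨f, ⟨hf.1, listsIn_mono K hsubU hf.2⟩, u, chainsIn_mono K hsubU _ hu, hcu⟩
    set c' := c - listCone K y b with hc'
    have hc'e : c' ∈ chainsIn K ((U.erase y : Finset L) : Set L) (q + 1) := by
      rw [hc', ← sum_listCone_listTail K hc, ← Finset.add_sum_erase _ _ (Finset.mem_univ y),
        add_sub_cancel_left]
      refine Submodule.sum_mem _ fun x hx => ?_
      have hxy := Finset.ne_of_mem_erase hx
      by_cases hxU : ⊥ < x ∧ x ∈ (U : Set L)
      · refine listCone_mem_chainsIn K (U := Set.Iio x) hxU.1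
          (Finset.mem_coe.2 (Finset.mem_erase.2 ⟨hxy, hxU.2⟩)) (fun a ha => ?_) (fun a ha => ha) ?_
        · exact hUe (le_of_lt ha) (Finset.mem_coe.2 (Finset.mem_erase.2 ⟨hxy, hxU.2⟩))
        · refine listTail_mem_supported K (S := chainLists (U : Set L) (q + 1)) (fun l hl => ?_) hc
          obtain ⟨h1, h2, h3⟩ := hl
          rw [List.pairwise_cons] at h2
          exact ⟨by simpa using h1, h2.2, fun a ha => ⟨(h3 a (by simp [ha])).1, h2.1 a ha⟩⟩
      · rw [listTail_eq_zero K hc hxU, map_zero]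
        exact zero_mem _
    have hcsum : c = listCone K y b + c' := by rw [hc']; abel
    have hdb : q ≠ 0 → listBdry K b ∈ newCycles K (minModel K L (q - 1)) y := by
      intro hq
      obtain ⟨q, rfl⟩ := Nat.exists_eq_succ_of_ne_zero hq
      have h1 := listTail_mem_newCycles K hd y
      rw [hcsum, map_add, listBdry_listCone, map_add, map_sub, listTail_listCone,
        listTail_eq_zero K hbc (by simp),
        listTail_eq_zero K (listBdry_mem_chainsIn K hc'e) (by simp)] at h1
      simpa using h1
    have hdb' : listBdry K b ∈ minModel K L (q - 1) := by
      by_cases hq : q = 0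
      · subst hq
        have : listBdry K b = 0 := by
          have : b = Finsupp.single [] (b []) := by
            ext l
            cases l with
            | nil => simp
            | cons y l =>
              rw [chainsIn, Finsupp.mem_supported'] at hbc
              rw [hbc (y :: l) (by simp [chainLists])]
              simp
          rw [this, listBdry_nil]
        rw [this]
        exact zero_mem _
      · exact (newCycles_le K _ y (hdb hq)).1.1
    obtain ⟨f, hf, u, hu, hbu⟩ := ih _ ((Finset.card_le_card hIio).trans_lt hcard)
      (Finset.univ.filter (· < y)) (by rw [hIio']; exact isLowerSet_Iio y) q b
      (by rw [hIio']; exact hbc) hdb' rfl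
    rw [hIio'] at hf hu
    have hdf : listBdry K f = listBdry K b := by
      rw [hbu, map_add, listBdry_listBdry, add_zero]
    have hdf0 : listBdry K f = 0 := by
      cases q with
      | zero =>
        obtain ⟨a, rfl⟩ := Submodule.mem_span_singleton.1 hf.1
        rw [map_smul, listBdry_nil, smul_zero]
      | succ q =>
        refine Submodule.disjoint_def.1 (disjoint_decomposable_new K (minModel K L q) y) _
          (listBdry_mem_decomposable K hf.1 hf.2) ?_
        rw [hdf]
        exact hdb (by simp)
    have hfZ : f ∈ cyclesBelow K (minModel K L q) y := ⟨hf, hdf0⟩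
    rw [← decomposable_sup_new, Submodule.mem_sup] at hfZ
    obtain ⟨ν, hν, w, hw, rfl⟩ := hfZ
    obtain ⟨v, hv, rfl⟩ := decomposable_le_map_Iio K q y hν
    have huv : u + v ∈ chainsIn K (Set.Iio y) (q + 1) :=
      add_mem hu (minModel_inf_le_chainsIn K _ _ hv)
    have hbe : b = w + listBdry K (u + v) := by rw [hbu, map_add]; abel
    obtain ⟨f', hf', u', hu', hcu'⟩ := ih _ hcard _ hUe (q + 1) (c' + (u + v))
      (add_mem hc'e (chainsIn_mono K hsub _ huv)) (by
        rw [Nat.add_sub_cancel]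
        have : listBdry K (c' + (u + v)) = listBdry K c - w := by
          rw [hcsum]
          simp only [map_add, listBdry_listCone]
          conv_rhs => rw [hbe]
          simp only [map_add, listBdry_listBdry, listBdry_of_mem_newCycles K hw]
          simp
          abel
        rw [this]
        exact sub_mem hd (newCycles_le K _ y hw).1.1) rfl
    refine ⟨listCone K y w + f', ⟨add_mem (listCone_mem_minModel K hybot hw) hf'.1, add_mem ?_ ?_⟩,
      u' - listCone K y (u + v), sub_mem (chainsIn_mono K hsubU _ hu') ?_, ?_⟩
    · exact listCone_mem_listsIn K (fun a ha => hU ha hyU) (newCycles_le K _ y hw).1.2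
    · exact listsIn_mono K hsubU hf'.2
    · exact listCone_mem_chainsIn K hybot hyU (hsub.trans hsubU) (fun a ha => ha) huv
    · have h1 : c' = f' + listBdry K u' - (u + v) := by rw [← hcu']; abel
      conv_lhs => rw [hcsum, hbe, h1]
      simp only [map_sub, listBdry_listCone, map_add]
      abel

/-- New cycles below `y` exist iff the open interval below `y` has homology. -/
lemma newCycles_ne_bot_iff [Finite L] (q : ℕ) (y : L) :
    newCycles K (minModel K L q) y ≠ ⊥ ↔
      ∃ z ∈ chainsIn K (Set.Iio y) q, listBdry K z = 0 ∧
        ∀ u ∈ chainsIn K (Set.Iio y) (q + 1), listBdry K u ≠ z := by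
  classical
  have := Fintype.ofFinite L
  have hIio : ((Finset.univ.filter (· < y) : Finset L) : Set L) = Set.Iio y := by
    ext; simp
  have hlow : IsLowerSet ((Finset.univ.filter (· < y) : Finset L) : Set L) := by
    rw [hIio]; exact isLowerSet_Iio y
  have qi := fun q => minModel_quasiIso K (Finset.univ.filter (· < y)) hlow q
  simp only [hIio] at qi
  constructor
  · intro h
    obtain ⟨w, hw, hw0⟩ := Submodule.exists_mem_ne_zero_of_ne_bot h
    have hwZ := newCycles_le K _ y hw
    refine ⟨w, minModel_inf_le_chainsIn K _ _ hwZ.1, hwZ.2, ?_⟩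
    rintro u hu rfl
    obtain ⟨f, hf, v, hv, rfl⟩ := qi (q + 1) u hu hwZ.1.1
    rw [map_add, listBdry_listBdry, add_zero] at hw hw0
    exact hw0 (Submodule.disjoint_def.1 (disjoint_decomposable_new K (minModel K L q) y) _
      (listBdry_mem_decomposable K hf.1 hf.2) hw)
  · rintro ⟨z, hz, hdz, hzu⟩ hbot
    obtain ⟨f, hf, u, hu, rfl⟩ := qi q z hz (by rw [hdz]; exact zero_mem _)
    rw [map_add, listBdry_listBdry, add_zero] at hdz
    have hfZ : f ∈ cyclesBelow K (minModel K L q) y := ⟨hf, hdz⟩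
    rw [← decomposable_sup_new, hbot, sup_bot_eq] at hfZ
    obtain ⟨v, hv, rfl⟩ := decomposable_le_map_Iio K q y hfZ
    exact hzu (v + u) (add_mem (minModel_inf_le_chainsIn K _ _ hv) hu) (map_add _ _ _)

end Minimal

/-- A minimal multigraded complex over `L` that resolves the simple functor at `⊥`: basis elements
carry a homological degree `hd` and a multidegree `deg`. -/
structure MinComplex (R : Type*) [CommRing R] (L : Type*) [PartialOrder L] [OrderBot L]
    (ι : Type*) where
  d : (ι →₀ R) →ₗ[R] (ι →₀ R)
  hd : ι → ℕ
  deg : ι → L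
  unit : ι
  hd_unit : hd unit = 0
  deg_unit : deg unit = ⊥
  bot_lt_deg : ∀ e, hd e ≠ 0 → ⊥ < deg e
  d_d : ∀ v, d (d v) = 0
  d_single : ∀ e, d (Finsupp.single e 1) ∈
    Finsupp.supported R R {e' | hd e' + 1 = hd e ∧ deg e' < deg e}
  exists_d_eq : ∀ (q : ℕ) (x : L), ⊥ < x → ∀ z ∈ Finsupp.supported R R {e | hd e = q ∧ deg e ≤ x},
    d z = 0 → ∃ u ∈ Finsupp.supported R R {e | hd e = q + 1 ∧ deg e ≤ x}, d u = z

lemma Finsupp.map_mem_of_mem_supported {R ι M : Type*} [CommRing R] [AddCommMonoid M] [Module R M]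
    {S : Set ι} {N : Submodule R M} (f : (ι →₀ R) →ₗ[R] M)
    (h : ∀ e ∈ S, f (Finsupp.single e 1) ∈ N) {v : ι →₀ R} (hv : v ∈ Finsupp.supported R R S) :
    f v ∈ N := by
  rw [Finsupp.supported_eq_span_single] at hv
  refine (Submodule.span_le.2 ?_ : _ ≤ N.comap f) hv
  rintro _ ⟨e, he, rfl⟩
  exact h e he

namespace MinComplex

variable {R : Type*} [CommRing R] {L : Type*} [SemilatticeSup L] [OrderBot L] {ι : Type*}
  (F : MinComplex R L ι)

lemma d_single_eq_zero {e : ι} (he : F.hd e = 0) : F.d (Finsupp.single e 1) = 0 := by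
  have h := F.d_single e
  rw [Finsupp.mem_supported'] at h
  ext e'
  exact h e' fun h' => by
    have := h'.1
    omega

/-- `h` is a contracting homotopy on the basis elements of homological degree less than `N` which
raises multidegrees at most to the join with `x`. -/
def IsHomotopy (x : L) (N : ℕ) (h : (ι →₀ R) →ₗ[R] (ι →₀ R)) : Prop :=
  ∀ e, F.hd e < N →
    F.d (h (Finsupp.single e 1)) + h (F.d (Finsupp.single e 1)) = Finsupp.single e 1 ∧
    h (Finsupp.single e 1) ∈
      Finsupp.supported R R {e' | F.hd e' = F.hd e + 1 ∧ F.deg e' ≤ x ⊔ F.deg e}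

lemma exists_homotopy_succ {x : L} (hx : ⊥ < x) (N : ℕ) (h : (ι →₀ R) →ₗ[R] (ι →₀ R))
    (hh : F.IsHomotopy x N h) :
    ∃ h', F.IsHomotopy x (N + 1) h' ∧
      ∀ e, F.hd e < N → h' (Finsupp.single e 1) = h (Finsupp.single e 1) := by
  classical
  have key : ∀ e, F.hd e = N → ∃ u ∈ Finsupp.supported R R
      {e' | F.hd e' = F.hd e + 1 ∧ F.deg e' ≤ x ⊔ F.deg e},
      F.d u = Finsupp.single e 1 - h (F.d (Finsupp.single e 1)) := by
    intro e he
    have hmem := F.d_single e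
    refine F.exists_d_eq _ (x ⊔ F.deg e) (hx.trans_le le_sup_left) _ (sub_mem ?_ ?_) ?_
    · exact Finsupp.single_mem_supported R _ ⟨rfl, le_sup_right⟩
    · refine Finsupp.map_mem_of_mem_supported h (fun e' he' => ?_) hmem
      refine Finsupp.supported_mono ?_ (hh e' (by have := he'.1; omega)).2
      intro e'' he''
      exact ⟨by rw [he''.1, he'.1], he''.2.trans (sup_le_sup_left he'.2.le x)⟩
    · have : ∀ v ∈ Finsupp.supported R R {e' | F.hd e' + 1 = F.hd e ∧ F.deg e' < F.deg e},
          F.d (h v) = v - h (F.d v) := by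
        intro v hv
        have := Finsupp.map_mem_of_mem_supported (N := (⊥ : Submodule R (ι →₀ R)))
          (F.d ∘ₗ h + h ∘ₗ F.d - LinearMap.id) (fun e' he' => ?_) hv
        · simp only [Submodule.mem_bot, LinearMap.sub_apply, LinearMap.add_apply,
            LinearMap.comp_apply, LinearMap.id_apply] at this
          rw [sub_eq_zero] at this
          exact eq_sub_of_add_eq this
        · simp only [Submodule.mem_bot, LinearMap.sub_apply, LinearMap.add_apply,
            LinearMap.comp_apply, LinearMap.id_apply]
          rw [(hh e' (by have := he'.1; omega)).1, sub_self]
      rw [map_sub, this _ hmem, F.d_d, map_zero, sub_zero, sub_self]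
  choose! u hu hdu using key
  let h' : (ι →₀ R) →ₗ[R] (ι →₀ R) := Finsupp.linearCombination R
    fun e => if F.hd e < N then h (Finsupp.single e 1) else u e
  have h'lt : ∀ e, F.hd e < N → h' (Finsupp.single e 1) = h (Finsupp.single e 1) := by
    intro e he
    simp [h', he]
  have h'd : ∀ e, F.hd e < N + 1 →
      h' (F.d (Finsupp.single e 1)) = h (F.d (Finsupp.single e 1)) := by
    intro e he
    have := Finsupp.map_mem_of_mem_supported (N := (⊥ : Submodule R (ι →₀ R))) (h' - h)
      (fun e' he' => ?_) (F.d_single e)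
    · rwa [Submodule.mem_bot, LinearMap.sub_apply, sub_eq_zero] at this
    · rw [Submodule.mem_bot, LinearMap.sub_apply, sub_eq_zero]
      exact h'lt e' (by have := he'.1; omega)
  refine ⟨h', fun e he => ?_, h'lt⟩
  rw [h'd e he]
  rcases Nat.lt_succ_iff_lt_or_eq.1 he with hlt | heq
  · rw [h'lt e hlt]
    exact hh e hlt
  · have : h' (Finsupp.single e 1) = u e := by simp [h', heq]
    rw [this, hdu e heq]
    exact ⟨by abel, hu e heq⟩

lemma exists_homotopy {x : L} (hx : ⊥ < x) : ∃ h : (ι →₀ R) →ₗ[R] (ι →₀ R),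
    (∀ v, F.d (h v) + h (F.d v) = v) ∧ ∀ e, h (Finsupp.single e 1) ∈
      Finsupp.supported R R {e' | F.hd e' = F.hd e + 1 ∧ F.deg e' ≤ x ⊔ F.deg e} := by
  let H : (N : ℕ) → {h : (ι →₀ R) →ₗ[R] (ι →₀ R) // F.IsHomotopy x N h} := fun N =>
    Nat.rec ⟨0, fun e he => absurd he (Nat.not_lt_zero _)⟩
      (fun N h => ⟨(F.exists_homotopy_succ hx N h.1 h.2).choose,
        (F.exists_homotopy_succ hx N h.1 h.2).choose_spec.1⟩) N
  have hstep : ∀ N e, F.hd e < N →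
      (H (N + 1)).1 (Finsupp.single e 1) = (H N).1 (Finsupp.single e 1) := fun N =>
    (F.exists_homotopy_succ hx N (H N).1 (H N).2).choose_spec.2
  have hstable : ∀ e N, F.hd e + 1 ≤ N →
      (H N).1 (Finsupp.single e 1) = (H (F.hd e + 1)).1 (Finsupp.single e 1) := by
    intro e N hN
    induction N, hN using Nat.le_induction with
    | base => rfl
    | succ N hN ih => rw [hstep N e hN, ih]
  let h : (ι →₀ R) →ₗ[R] (ι →₀ R) :=
    Finsupp.linearCombination R fun e => (H (F.hd e + 1)).1 (Finsupp.single e 1)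
  have hsingle : ∀ e, h (Finsupp.single e 1) = (H (F.hd e + 1)).1 (Finsupp.single e 1) := by
    intro e
    simp [h]
  refine ⟨h, fun v => ?_, fun e => ?_⟩
  · suffices F.d ∘ₗ h + h ∘ₗ F.d = LinearMap.id from LinearMap.congr_fun this v
    refine Finsupp.lhom_ext' fun e => LinearMap.ext_ring ?_
    simp only [LinearMap.comp_apply, LinearMap.add_apply, Finsupp.lsingle_apply,
      LinearMap.id_apply]
    rw [hsingle]
    have hd : h (F.d (Finsupp.single e 1)) =
        (H (F.hd e + 1)).1 (F.d (Finsupp.single e 1)) := by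
      have := Finsupp.map_mem_of_mem_supported (N := (⊥ : Submodule R (ι →₀ R)))
        (h - (H (F.hd e + 1)).1) (fun e' he' => ?_) (F.d_single e)
      · rwa [Submodule.mem_bot, LinearMap.sub_apply, sub_eq_zero] at this
      · rw [Submodule.mem_bot, LinearMap.sub_apply, sub_eq_zero, hsingle]
        exact (hstable e' _ (by have := he'.1; omega)).symm
    rw [hd]
    exact ((H (F.hd e + 1)).2 e (Nat.lt_succ_self _)).1
  · rw [hsingle]
    exact ((H (F.hd e + 1)).2 e (Nat.lt_succ_self _)).2

open Classical in
/-- A contracting homotopy raising multidegrees at most to the join with `x`. -/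
def homotopy (x : L) : (ι →₀ R) →ₗ[R] (ι →₀ R) :=
  if hx : ⊥ < x then (F.exists_homotopy hx).choose else 0

lemma homotopy_spec {x : L} (hx : ⊥ < x) (v : ι →₀ R) :
    F.d (F.homotopy x v) + F.homotopy x (F.d v) = v := by
  rw [homotopy, dif_pos hx]
  exact (F.exists_homotopy hx).choose_spec.1 v

lemma homotopy_single_mem (x : L) (e : ι) : F.homotopy x (Finsupp.single e 1) ∈
    Finsupp.supported R R {e' | F.hd e' = F.hd e + 1 ∧ F.deg e' ≤ x ⊔ F.deg e} := by
  rw [homotopy]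
  split_ifs with hx
  · exact (F.exists_homotopy hx).choose_spec.2 e
  · exact zero_mem _

open TensorProduct

variable (R ι) in
/-- The tensor square of the underlying module of a complex. -/
def TSq : Type _ := (ι →₀ R) ⊗[R] (ι →₀ R)

instance : AddCommGroup (TSq R ι) := inferInstanceAs (AddCommGroup ((ι →₀ R) ⊗[R] (ι →₀ R)))

instance : Module R (TSq R ι) := inferInstanceAs (Module R ((ι →₀ R) ⊗[R] (ι →₀ R)))

/-- The pure tensors, as a bilinear map. -/
def tens : (ι →₀ R) →ₗ[R] (ι →₀ R) →ₗ[R] TSq R ι := TensorProduct.mk R (ι →₀ R) (ι →₀ R)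

/-- The linear map out of the tensor square induced by a bilinear map. -/
def TSq.lift {M : Type*} [AddCommGroup M] [Module R M]
    (φ : (ι →₀ R) →ₗ[R] (ι →₀ R) →ₗ[R] M) : TSq R ι →ₗ[R] M :=
  TensorProduct.lift φ

@[simp] lemma TSq.lift_tens {M : Type*} [AddCommGroup M] [Module R M]
    (φ : (ι →₀ R) →ₗ[R] (ι →₀ R) →ₗ[R] M) (u v : ι →₀ R) : TSq.lift φ (tens u v) = φ u v :=
  rfl

lemma TSq.induction_on {p : TSq R ι → Prop} (t : TSq R ι) (tmul : ∀ u v, p (tens u v))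
    (sum : ∀ s t, p s → p t → p (s + t)) : p t :=
  TensorProduct.induction_on t ((map_zero (tens (0 : ι →₀ R))).subst (tmul 0 0)) tmul sum

variable (R) in
/-- The tensor of two basis vectors. -/
def basisTensor (e f : ι) : TSq R ι := tens (Finsupp.single e 1) (Finsupp.single f 1)

variable (R) in
/-- The span of the basis tensors satisfying `P`. -/
def tensorSpan (P : ι → ι → Prop) : Submodule R (TSq R ι) :=
  Submodule.span R {t | ∃ e f, P e f ∧ t = basisTensor R e f}

lemma basisTensor_mem {P : ι → ι → Prop} {e f : ι} (h : P e f) :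
    basisTensor R e f ∈ tensorSpan R P :=
  Submodule.subset_span ⟨e, f, h, rfl⟩

lemma map_mem_of_mem_tensorSpan {M : Type*} [AddCommMonoid M] [Module R M] {N : Submodule R M}
    {P : ι → ι → Prop} (φ : TSq R ι →ₗ[R] M)
    (h : ∀ e f, P e f → φ (basisTensor R e f) ∈ N) {t : TSq R ι}
    (ht : t ∈ tensorSpan R P) : φ t ∈ N := by
  refine (Submodule.span_le.2 ?_ : _ ≤ N.comap φ) ht
  rintro _ ⟨e, f, hef, rfl⟩
  exact h e f hef

lemma tensorSpan_mono {P Q : ι → ι → Prop} (h : ∀ e f, P e f → Q e f) :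
    tensorSpan R P ≤ tensorSpan R Q :=
  Submodule.span_mono fun _ ⟨e, f, hef, ht⟩ => ⟨e, f, h e f hef, ht⟩

lemma single_tmul_mem {P : ι → ι → Prop} {S : Set ι} {e : ι} (h : ∀ f ∈ S, P e f) {v : ι →₀ R}
    (hv : v ∈ Finsupp.supported R R S) : tens (Finsupp.single e 1) v ∈ tensorSpan R P :=
  Finsupp.map_mem_of_mem_supported (tens (Finsupp.single e 1))
    (fun f hf => basisTensor_mem (h f hf)) hv

lemma tmul_single_mem {P : ι → ι → Prop} {S : Set ι} {f : ι} (h : ∀ e ∈ S, P e f) {v : ι →₀ R}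
    (hv : v ∈ Finsupp.supported R R S) : tens v (Finsupp.single f 1) ∈ tensorSpan R P :=
  Finsupp.map_mem_of_mem_supported
    (tens.flip (Finsupp.single f 1))
    (fun e he => basisTensor_mem (h e he)) hv

/-- The differential on the left factor. -/
def dLeft : TSq R ι →ₗ[R] TSq R ι := TSq.lift (tens ∘ₗ F.d)

/-- The differential on the right factor. -/
def dRight : TSq R ι →ₗ[R] TSq R ι := TSq.lift (tens.compl₂ F.d)

/-- The homotopy on the left factor. -/
def hLeft : TSq R ι →ₗ[R] TSq R ι :=
  TSq.lift (LinearMap.flip (Finsupp.lsum R fun f => LinearMap.toSpanSingleton R _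
    (tens.flip (Finsupp.single f 1) ∘ₗ F.homotopy (F.deg f))))

/-- The homotopy on the right factor. -/
def hRight : TSq R ι →ₗ[R] TSq R ι :=
  TSq.lift (Finsupp.lsum R fun e => LinearMap.toSpanSingleton R _
    (tens (Finsupp.single e 1) ∘ₗ F.homotopy (F.deg e)))

@[simp] lemma dLeft_tmul (u v : ι →₀ R) : F.dLeft (tens u v) = tens (F.d u) v := rfl

@[simp] lemma dRight_tmul (u v : ι →₀ R) : F.dRight (tens u v) = tens u (F.d v) := rfl

@[simp] lemma hLeft_tmul (u : ι →₀ R) (f : ι) : F.hLeft (tens u (Finsupp.single f 1)) =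
    tens (F.homotopy (F.deg f) u) (Finsupp.single f 1) := by
  simp [hLeft]

@[simp] lemma hRight_tmul (v : ι →₀ R) (e : ι) : F.hRight (tens (Finsupp.single e 1) v) =
    tens (Finsupp.single e 1) (F.homotopy (F.deg e) v) := by
  simp [hRight]

lemma dLeft_dRight (t : TSq R ι) :
    F.dLeft (F.dRight t) = F.dRight (F.dLeft t) := by
  induction t using TSq.induction_on with
  | tmul u v => simp
  | sum s t hs ht => simp only [map_add, hs, ht]

lemma dLeft_dLeft (t : TSq R ι) : F.dLeft (F.dLeft t) = 0 := by
  induction t using TSq.induction_on with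
  | tmul u v => simp [F.d_d]
  | sum s t hs ht => simp only [map_add, hs, ht, add_zero]

lemma dRight_dRight (t : TSq R ι) : F.dRight (F.dRight t) = 0 := by
  induction t using TSq.induction_on with
  | tmul u v => simp [F.d_d]
  | sum s t hs ht => simp only [map_add, hs, ht, add_zero]

lemma hLeft_spec {t : TSq R ι} (ht : t ∈ tensorSpan R fun _ f => F.hd f ≠ 0) :
    F.dLeft (F.hLeft t) + F.hLeft (F.dLeft t) = t := by
  have := map_mem_of_mem_tensorSpan (N := (⊥ : Submodule R (TSq R ι)))
    (F.dLeft ∘ₗ F.hLeft + F.hLeft ∘ₗ F.dLeft - LinearMap.id) (fun e f hf => ?_) ht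
  · simpa [sub_eq_zero] using this
  · simp only [basisTensor, Submodule.mem_bot, LinearMap.sub_apply, LinearMap.add_apply,
      LinearMap.comp_apply, LinearMap.id_apply, hLeft_tmul, dLeft_tmul]
    rw [← LinearMap.add_apply, ← map_add, F.homotopy_spec (F.bot_lt_deg f hf), sub_self]

lemma hRight_spec {t : TSq R ι} (ht : t ∈ tensorSpan R fun e _ => F.hd e ≠ 0) :
    F.dRight (F.hRight t) + F.hRight (F.dRight t) = t := by
  have := map_mem_of_mem_tensorSpan (N := (⊥ : Submodule R (TSq R ι)))
    (F.dRight ∘ₗ F.hRight + F.hRight ∘ₗ F.dRight - LinearMap.id) (fun e f he => ?_) ht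
  · simpa [sub_eq_zero] using this
  · simp only [basisTensor, Submodule.mem_bot, LinearMap.sub_apply, LinearMap.add_apply,
      LinearMap.comp_apply, LinearMap.id_apply, hRight_tmul, dRight_tmul]
    rw [← map_add, F.homotopy_spec (F.bot_lt_deg e he), sub_self]

/-- The span of the basis tensors whose multidegrees do not join to an element above `m`. -/
def low (m : L) : Submodule R (TSq R ι) :=
  tensorSpan R fun e f => ¬ m ≤ F.deg e ⊔ F.deg f

lemma dLeft_mem_low {m : L} {t : TSq R ι} (ht : t ∈ F.low m) :
    F.dLeft t ∈ F.low m :=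
  map_mem_of_mem_tensorSpan F.dLeft (fun e _ hef => tmul_single_mem
    (fun _ he' h => hef (h.trans (sup_le_sup_right he'.2.le _))) (F.d_single e)) ht

lemma dRight_mem_low {m : L} {t : TSq R ι} (ht : t ∈ F.low m) :
    F.dRight t ∈ F.low m :=
  map_mem_of_mem_tensorSpan F.dRight (fun _ f hef => single_tmul_mem
    (fun _ hf' h => hef (h.trans (sup_le_sup_left hf'.2.le _))) (F.d_single f)) ht

lemma hLeft_mem_low {m : L} {t : TSq R ι} (ht : t ∈ F.low m) :
    F.hLeft t ∈ F.low m := by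
  refine map_mem_of_mem_tensorSpan F.hLeft (fun e f hef => ?_) ht
  rw [basisTensor, hLeft_tmul]
  refine tmul_single_mem (fun e' he' h => hef (h.trans ?_)) (F.homotopy_single_mem (F.deg f) e)
  exact sup_le (he'.2.trans (sup_comm _ _).le) le_sup_right

lemma hRight_mem_low {m : L} {t : TSq R ι} (ht : t ∈ F.low m) :
    F.hRight t ∈ F.low m := by
  refine map_mem_of_mem_tensorSpan F.hRight (fun e f hef => ?_) ht
  rw [basisTensor, hRight_tmul]
  exact single_tmul_mem (fun f' hf' h => hef (h.trans (sup_le le_sup_left hf'.2)))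
    (F.homotopy_single_mem (F.deg e) f)

/-- The elements of the form `u + v` with `dLeft u` and `dRight v` low and `u` of right degree
`j`. -/
def Split (m : L) (j : ℕ) (c : TSq R ι) : Prop :=
  ∃ u v, c = u + v ∧ F.dLeft u ∈ F.low m ∧ F.dRight v ∈ F.low m ∧
    u ∈ tensorSpan R fun _ f => F.hd f = j

lemma Split.exists_dLeft {m : L} {j : ℕ} (hj : j ≠ 0) {c : TSq R ι}
    (hc : F.Split m j c) :
    ∃ g ∈ tensorSpan R fun _ f => F.hd f + 1 = j, F.dRight g = 0 ∧
      F.dRight c - F.dLeft g ∈ F.low m := by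
  obtain ⟨u, v, rfl, hu, hv, huj⟩ := hc
  refine ⟨F.dRight (F.hLeft u), ?_, F.dRight_dRight _, ?_⟩
  · have h1 : F.hLeft u ∈ tensorSpan R fun _ f => F.hd f = j := by
      refine map_mem_of_mem_tensorSpan F.hLeft (fun e f hf => ?_) huj
      rw [basisTensor, hLeft_tmul]
      exact tmul_single_mem (P := fun _ f => F.hd f = j) (fun _ _ => hf)
        (F.homotopy_single_mem (F.deg f) e)
    refine map_mem_of_mem_tensorSpan F.dRight (fun e f hf => ?_) h1
    exact single_tmul_mem (fun f' hf' => hf'.1.trans hf) (F.d_single f)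
  · have h1 := F.hLeft_spec (t := u) (tensorSpan_mono (fun _ f hf => by rw [hf]; exact hj) huj)
    have h2 : F.dRight (u + v) - F.dLeft (F.dRight (F.hLeft u)) =
        F.dRight (F.hLeft (F.dLeft u)) + F.dRight v := by
      have h3 := congrArg F.dRight h1
      rw [map_add] at h3
      rw [map_add, ← h3, dLeft_dRight]
      abel
    rw [h2]
    exact add_mem (F.dRight_mem_low (F.hLeft_mem_low hu)) hv

/-- Some basis element of degree `a` has multidegree above that of `e`, for all `a` between the
degree of `e` and `n`. -/
def Reach (n : ℕ) (e : ι) : Prop :=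
  ∀ a, F.hd e ≤ a → a ≤ n → ∃ e', F.hd e' = a ∧ F.deg e ≤ F.deg e'

/-- The zigzag through the double complex starting with `e₀ ⊗ 1`. -/
def zigzag (e₀ : ι) : ℕ → TSq R ι
  | 0 => F.hRight (basisTensor R e₀ F.unit)
  | j + 1 => F.hRight (F.dLeft (zigzag e₀ j))

lemma dLeft_mem_reach {n j : ℕ} {c : TSq R ι}
    (hc : c ∈ tensorSpan R fun e f => F.hd e + j = n ∧ F.hd f = j + 1 ∧ F.Reach n e) :
    F.dLeft c ∈ tensorSpan R fun e f => F.hd e + (j + 1) = n ∧ F.hd f = j + 1 ∧ F.Reach n e := by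
  refine map_mem_of_mem_tensorSpan F.dLeft (fun e f h => ?_) hc
  refine tmul_single_mem (fun e' he' => ⟨by have := he'.1; omega, h.2.1, fun a h1 h2 => ?_⟩)
    (F.d_single e)
  rcases h1.eq_or_lt with h1 | h1
  · exact ⟨e', h1, le_rfl⟩
  · obtain ⟨e'', h3, h4⟩ := h.2.2 a (by have := he'.1; omega) h2
    exact ⟨e'', h3, he'.2.le.trans h4⟩

lemma zigzag_mem (e₀ : ι) (j : ℕ) : F.zigzag e₀ j ∈ tensorSpan R fun e f =>
    F.hd e + j = F.hd e₀ ∧ F.hd f = j + 1 ∧ F.Reach (F.hd e₀) e := by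
  induction j with
  | zero =>
    rw [zigzag, basisTensor, hRight_tmul]
    refine single_tmul_mem (fun f hf => ⟨rfl, by rw [hf.1, F.hd_unit], fun a h1 h2 => ?_⟩)
      (F.homotopy_single_mem _ _)
    exact ⟨e₀, le_antisymm h1 h2, le_rfl⟩
  | succ j ih =>
    refine map_mem_of_mem_tensorSpan F.hRight (fun e f h => ?_) (F.dLeft_mem_reach ih)
    rw [basisTensor, hRight_tmul]
    exact single_tmul_mem (fun f' hf' => ⟨h.1, by rw [hf'.1, h.2.1], h.2.2⟩)
      (F.homotopy_single_mem _ _)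

lemma dRight_zigzag_zero {e₀ : ι} (he₀ : F.hd e₀ ≠ 0) :
    F.dRight (F.zigzag e₀ 0) = basisTensor R e₀ F.unit := by
  have h := F.hRight_spec (t := basisTensor R e₀ F.unit) (basisTensor_mem he₀)
  have h0 : F.dRight (basisTensor R e₀ F.unit) = 0 := by
    rw [basisTensor, dRight_tmul, F.d_single_eq_zero F.hd_unit, map_zero]
  rwa [h0, map_zero, add_zero] at h

lemma dRight_zigzag_succ (e₀ : ι) (j : ℕ) (hj : j + 1 < F.hd e₀) :
    F.dRight (F.zigzag e₀ (j + 1)) - F.dLeft (F.zigzag e₀ j) ∈ F.low (F.deg e₀) := by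
  have key : F.dLeft (F.dRight (F.zigzag e₀ j)) ∈ F.low (F.deg e₀) := by
    induction j with
    | zero =>
      rw [F.dRight_zigzag_zero (by omega)]
      refine tmul_single_mem (fun e' he' h => ?_) (F.d_single e₀)
      rw [F.deg_unit, sup_bot_eq] at h
      exact he'.2.not_ge h
    | succ j ih =>
      have hspec := F.hRight_spec (t := F.dLeft (F.zigzag e₀ j))
        (tensorSpan_mono (fun e f h => by omega) (F.dLeft_mem_reach (F.zigzag_mem e₀ j)))
      have h1 := F.dLeft_mem_low (F.hRight_mem_low (ih (by omega)))
      have h2 : F.dLeft (F.dRight (F.zigzag e₀ (j + 1))) =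
          - F.dLeft (F.hRight (F.dLeft (F.dRight (F.zigzag e₀ j)))) := by
        rw [eq_neg_iff_add_eq_zero, ← map_add, zigzag, F.dLeft_dRight (F.zigzag e₀ j), hspec,
          dLeft_dLeft]
      rw [h2]
      exact neg_mem h1
  have hspec := F.hRight_spec (t := F.dLeft (F.zigzag e₀ j))
    (tensorSpan_mono (fun e f h => by omega) (F.dLeft_mem_reach (F.zigzag_mem e₀ j)))
  have h2 : F.dRight (F.zigzag e₀ (j + 1)) - F.dLeft (F.zigzag e₀ j) =
      - F.hRight (F.dLeft (F.dRight (F.zigzag e₀ j))) := by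
    rw [sub_eq_iff_eq_add, neg_add_eq_sub, eq_sub_iff_add_eq, zigzag, F.dLeft_dRight, hspec]
  rw [h2]
  exact neg_mem (F.hRight_mem_low key)

/-- The coefficient of `e₀ ⊗ 1`. -/
def topCoeff (e₀ : ι) : TSq R ι →ₗ[R] R :=
  TSq.lift ((LinearMap.mul R R).compl₁₂ (Finsupp.lapply e₀) (Finsupp.lapply F.unit))

lemma topCoeff_tmul (e₀ : ι) (u v : ι →₀ R) : F.topCoeff e₀ (tens u v) = u e₀ * v F.unit := rfl

lemma topCoeff_low {e₀ : ι} {t : TSq R ι} (ht : t ∈ F.low (F.deg e₀)) :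
    F.topCoeff e₀ t = 0 := by
  classical
  refine (Submodule.mem_bot R).1
    (map_mem_of_mem_tensorSpan (F.topCoeff e₀) (fun e f h => ?_) ht)
  rw [Submodule.mem_bot, basisTensor, topCoeff_tmul, Finsupp.single_apply, if_neg, zero_mul]
  rintro rfl
  exact h le_sup_left

lemma topCoeff_dLeft {e₀ : ι} (htop : ∀ x, x ≤ F.deg e₀) (t : TSq R ι) :
    F.topCoeff e₀ (F.dLeft t) = 0 := by
  have h : ∀ u : ι →₀ R, F.d u e₀ = 0 := by
    intro u
    suffices Finsupp.lapply e₀ ∘ₗ F.d = (0 : (ι →₀ R) →ₗ[R] R) from LinearMap.congr_fun this u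
    refine Finsupp.lhom_ext' fun e => LinearMap.ext_ring ?_
    exact (Finsupp.mem_supported' R _).1 (F.d_single e) e₀ fun h => h.2.not_ge (htop _)
  induction t using TSq.induction_on with
  | tmul u v => rw [dLeft_tmul, topCoeff_tmul, h, zero_mul]
  | sum s t hs ht => rw [map_add, map_add, hs, ht, add_zero]

lemma not_split_zigzag [Nontrivial R] {e₀ : ι} (htop : ∀ x, x ≤ F.deg e₀) (j : ℕ)
    (hj : j < F.hd e₀) :
    ¬ F.Split (F.deg e₀) (j + 1) (F.zigzag e₀ j) := by
  induction j with
  | zero =>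
    intro hs
    obtain ⟨g, -, -, hg⟩ := hs.exists_dLeft F (by simp)
    have h1 := F.topCoeff_low hg
    rw [F.dRight_zigzag_zero (by omega), map_sub, F.topCoeff_dLeft htop, sub_zero, basisTensor,
      topCoeff_tmul] at h1
    simp at h1
  | succ j ih =>
    intro hs
    obtain ⟨g, hgj, hg0, hg⟩ := hs.exists_dLeft F (by simp)
    refine ih (by omega) ⟨F.zigzag e₀ j - g, g, by abel, ?_, by rw [hg0]; exact zero_mem _, ?_⟩
    · have h1 := sub_mem hg (F.dRight_zigzag_succ e₀ j hj)
      rw [sub_sub_sub_cancel_left] at h1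
      rwa [map_sub]
    · refine sub_mem (tensorSpan_mono (fun e f h => h.2.1) (F.zigzag_mem e₀ j))
        (tensorSpan_mono (fun e f h => ?_) hgj)
      omega

/-- A basis element of top multidegree and degree `p + q` forces basis elements of degrees `p` and
`q` whose multidegrees join to the top. -/
theorem exists_join_eq_top [Nontrivial R] {e₀ : ι} (htop : ∀ x, x ≤ F.deg e₀) {p q : ℕ} (hq : q ≠ 0)
    (hpq : p + q = F.hd e₀) :
    ∃ e f, F.hd e = p ∧ F.hd f = q ∧ F.deg e₀ ≤ F.deg e ⊔ F.deg f ∧ F.Reach (F.hd e₀) e := by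
  by_contra hcon
  push Not at hcon
  obtain ⟨j, rfl⟩ := Nat.exists_eq_succ_of_ne_zero hq
  refine F.not_split_zigzag htop j (by omega) ⟨F.zigzag e₀ j, 0, by simp, ?_, by simp,
    tensorSpan_mono (fun e f h => h.2.1) (F.zigzag_mem e₀ j)⟩
  refine tensorSpan_mono (fun e f h hle => ?_) (F.dLeft_mem_reach (F.zigzag_mem e₀ j))
  exact hcon e f (by omega) h.2.1 hle h.2.2

end MinComplex

section Realization

variable (L : Type*) [PartialOrder L] [OrderBot L]

/-- Indices of a basis of the minimal model. -/
abbrev MinIdx : Type _ :=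
  Option (Σ p : ℕ × Set.Ioi (⊥ : L),
    Module.Basis.ofVectorSpaceIndex K (newCycles K (minModel K L p.1) p.2.1))

namespace MinIdx

variable {K L}

/-- The homological degree. -/
def hd : MinIdx K L → ℕ
  | none => 0
  | Option.some e => e.1.1 + 1

/-- The multidegree. -/
def deg : MinIdx K L → L
  | none => ⊥
  | Option.some e => e.1.2.1

/-- The basis vector. -/
def vec : MinIdx K L → (List L →₀ K)
  | none => Finsupp.single [] 1
  | Option.some e => listCone K e.1.2.1 (Module.Basis.ofVectorSpace K _ e.2).1

end MinIdx

/-- The parametrization of the minimal model by its basis. -/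
def minParam : (MinIdx K L →₀ K) →ₗ[K] (List L →₀ K) :=
  Finsupp.linearCombination K MinIdx.vec

variable {K L}

@[simp] lemma minParam_single (e : MinIdx K L) : minParam K L (Finsupp.single e 1) = e.vec := by
  simp [minParam]

lemma MinIdx.exists_dual (e : MinIdx K L) :
    ∃ f : (List L →₀ K) →ₗ[K] K, f e.vec = 1 ∧ ∀ e' ≠ e, f e'.vec = 0 := by
  classical
  rcases e with _ | ⟨⟨q, y⟩, i⟩
  · refine ⟨Finsupp.lapply [], by simp [vec], fun e' he' => ?_⟩
    rcases e' with _ | e'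
    · exact absurd rfl he'
    · exact Finsupp.mapDomain_of_notMem_range _ _ (by simp)
  · obtain ⟨g, hg⟩ := LinearMap.exists_extend
      ((Module.Basis.ofVectorSpace K (newCycles K (minModel K L q) y.1)).coord i)
    have hg' : ∀ w : newCycles K (minModel K L q) y.1, g w.1 = _ :=
      fun w => LinearMap.congr_fun hg w
    let r : (List L →₀ K) →ₗ[K] (List L →₀ K) :=
      (Finsupp.supported K K {l : List L | l.length = q}).subtype ∘ₗ Finsupp.restrictDom K K _
    have hr : ∀ q' w, w ∈ chainsIn K (Set.univ : Set L) q' → r w = if q' = q then w else 0 := by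
      intro q' w hw
      rw [chainsIn, Finsupp.mem_supported'] at hw
      ext l
      simp only [r, LinearMap.comp_apply, Submodule.subtype_apply, Finsupp.restrictDom_apply,
        Finsupp.filter_apply]
      by_cases hl : w l = 0
      · split_ifs <;> simp [hl]
      · have : l.length = q' := (not_imp_comm.1 (hw l) hl).1
        subst this
        split_ifs <;> simp_all
    have hchain : ∀ (q' : ℕ) (y' : Set.Ioi (⊥ : L)) (w : newCycles K (minModel K L q') y'.1),
        w.1 ∈ chainsIn K (Set.univ : Set L) q' := fun q' y' w =>
      minModel_le_chainsIn K q' (newCycles_le K _ _ w.2).1.1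
    refine ⟨g ∘ₗ r ∘ₗ listTail K y.1, ?_, fun e' he' => ?_⟩
    · simp only [vec, LinearMap.comp_apply]
      rw [listTail_listCone, hr _ _ (hchain _ _ _), if_pos rfl, hg', Module.Basis.coord_apply,
        Module.Basis.repr_self, Finsupp.single_eq_same]
    · rcases e' with _ | ⟨⟨q', y'⟩, i'⟩
      · have : listTail K y.1 (Finsupp.single [] 1) = 0 := by
          ext l
          rw [listTail_apply]
          simp
        simp only [vec, LinearMap.comp_apply]
        rw [this, map_zero, map_zero]
      · simp only [vec, LinearMap.comp_apply]
        by_cases hy : y = y'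
        · subst hy
          rw [listTail_listCone, hr _ _ (hchain _ _ _)]
          split_ifs with hq
          · subst hq
            rw [hg', Module.Basis.coord_apply, Module.Basis.repr_self, Finsupp.single_apply,
              if_neg]
            rintro rfl
            exact he' rfl
          · rw [map_zero]
        · rw [listTail_listCone_of_ne K fun h => hy (Subtype.ext h), map_zero, map_zero]

lemma minParam_injective : Function.Injective (minParam K L) := by
  classical
  rw [← LinearMap.ker_eq_bot, LinearMap.ker_eq_bot']
  intro c hc
  ext e
  obtain ⟨f, hf1, hf0⟩ := e.exists_dual
  have : f ∘ₗ minParam K L = Finsupp.lapply e := by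
    refine Finsupp.lhom_ext' fun e' => LinearMap.ext_ring ?_
    simp only [LinearMap.comp_apply, Finsupp.lsingle_apply, minParam_single, Finsupp.lapply_apply]
    by_cases h : e' = e
    · subst h
      simp [hf1]
    · rw [hf0 e' h, Finsupp.single_apply, if_neg h]
  have h := LinearMap.congr_fun this c
  rw [LinearMap.comp_apply, hc, map_zero] at h
  exact h.symm

lemma MinIdx.vec_mem (e : MinIdx K L) {U : Set L} (hU : Set.Iic e.deg ⊆ U) :
    e.vec ∈ minModel K L e.hd ⊓ listsIn K U := by
  rcases e with _ | ⟨⟨q, y⟩, i⟩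
  · exact ⟨single_nil_mem_minModel K, minModel_zero_le_listsIn K U (single_nil_mem_minModel K)⟩
  · have h := (Module.Basis.ofVectorSpace K (newCycles K (minModel K L q) y.1) i).2
    exact ⟨listCone_mem_minModel K y.2 h, listCone_mem_listsIn K hU (newCycles_le K _ _ h).1.2⟩

lemma map_minParam [Finite L] (q : ℕ) {U : Set L} (hU : IsLowerSet U) (hbot : ⊥ ∈ U) :
    (Finsupp.supported K K {e : MinIdx K L | e.hd = q ∧ e.deg ∈ U}).map (minParam K L) =
      minModel K L q ⊓ listsIn K U := by
  have := Fintype.ofFinite L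
  apply le_antisymm
  · rintro _ ⟨c, hc, rfl⟩
    refine Finsupp.map_mem_of_mem_supported _ (fun e he => ?_) hc
    rw [minParam_single, ← he.1]
    exact e.vec_mem fun a ha => hU ha he.2
  · have hvec : ∀ e : MinIdx K L, e.hd = q → e.deg ∈ U → e.vec ∈
        (Finsupp.supported K K {e : MinIdx K L | e.hd = q ∧ e.deg ∈ U}).map (minParam K L) :=
      fun e h1 h2 => ⟨Finsupp.single e 1, Finsupp.single_mem_supported K _ ⟨h1, h2⟩,
        minParam_single e⟩
    cases q with
    | zero =>
      refine inf_le_left.trans ?_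
      rw [minModel, Submodule.span_le, Set.singleton_subset_iff]
      exact hvec none rfl hbot
    | succ q =>
      intro c hc
      have hc' := minModel_inf_le_chainsIn K U _ hc
      rw [← sum_listCone_listTail K hc']
      refine Submodule.sum_mem _ fun y _ => ?_
      by_cases hy : ⊥ < y ∧ y ∈ U
      · let b := Module.Basis.ofVectorSpace K (newCycles K (minModel K L q) y)
        have hb : (⊤ : Submodule K _) ≤ ((Finsupp.supported K K
            {e : MinIdx K L | e.hd = q + 1 ∧ e.deg ∈ U}).map (minParam K L)).comap
              (listCone K y ∘ₗ (newCycles K (minModel K L q) y).subtype) := by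
          rw [← b.span_eq, Submodule.span_le]
          rintro _ ⟨i, rfl⟩
          exact hvec (Option.some ⟨(q, ⟨y, hy.1⟩), i⟩) rfl hy.2
        exact hb (x := ⟨_, listTail_mem_newCycles K hc.1 y⟩) trivial
      · rw [listTail_eq_zero K hc' hy, map_zero]
        exact zero_mem _

lemma MinIdx.exists_bdry [Finite L] (e : MinIdx K L) :
    ∃ c ∈ Finsupp.supported K K {e' : MinIdx K L | e'.hd + 1 = e.hd ∧ e'.deg < e.deg},
      minParam K L c = listBdry K e.vec := by
  rcases e with _ | ⟨⟨q, y⟩, i⟩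
  · exact ⟨0, zero_mem _, by rw [map_zero, vec, listBdry_nil]⟩
  · have h := (Module.Basis.ofVectorSpace K (newCycles K (minModel K L q) y.1) i).2
    have h' := (newCycles_le K _ _ h).1
    rw [← map_minParam q (isLowerSet_Iio y.1) y.2] at h'
    obtain ⟨c, hc, hc'⟩ := h'
    refine ⟨c, ?_, ?_⟩
    · exact Finsupp.supported_mono (fun e' he' => And.intro (congrArg (· + 1) he'.1) he'.2) hc
    · rw [hc', vec, listBdry_listCone_newCycles K h]

/-- The minimal model, as a minimal complex. -/
theorem exists_minComplex [Finite L] : ∃ F : MinComplex K L (MinIdx K L),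
    ∀ (q : ℕ) (y : L), ⊥ < y → ((∃ e, F.hd e = q + 1 ∧ F.deg e = y) ↔
      newCycles K (minModel K L q) y ≠ ⊥) := by
  choose δ hδ hδ' using MinIdx.exists_bdry (K := K) (L := L)
  have hδs : ∀ e, Finsupp.linearCombination K δ (Finsupp.single e 1) = δ e := fun e => by simp
  have hcomm : ∀ v, minParam K L (Finsupp.linearCombination K δ v) =
      listBdry K (minParam K L v) := by
    intro v
    suffices minParam K L ∘ₗ Finsupp.linearCombination K δ = listBdry K ∘ₗ minParam K L from
      LinearMap.congr_fun this v
    refine Finsupp.lhom_ext' fun e => LinearMap.ext_ring ?_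
    simp only [LinearMap.comp_apply, Finsupp.lsingle_apply, minParam_single, hδs, hδ']
  refine ⟨{
    d := Finsupp.linearCombination K δ
    hd := MinIdx.hd
    deg := MinIdx.deg
    unit := none
    hd_unit := rfl
    deg_unit := rfl
    bot_lt_deg := ?_
    d_d := ?_
    d_single := fun e => (hδs e).symm ▸ hδ e
    exists_d_eq := ?_ }, fun q y hy => ?_⟩
  · rintro (_ | e) he
    · exact absurd rfl he
    · exact e.1.2.2
  · intro v
    apply minParam_injective
    rw [hcomm, hcomm, listBdry_listBdry, map_zero]
  · intro q x hx z hz hdz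
    have hmap := fun q => map_minParam (K := K) q (isLowerSet_Iic x) (bot_le : ⊥ ≤ x)
    have hz' := (hmap q).le (Submodule.mem_map_of_mem hz)
    obtain ⟨u, hu, huz⟩ := minModel_exact K hx hz'.1 hz'.2 (by rw [← hcomm, hdz, map_zero])
    rw [← hmap (q + 1)] at hu
    obtain ⟨u, hu', rfl⟩ := hu
    exact ⟨u, hu', minParam_injective ((hcomm u).trans huz)⟩
  · constructor
    · rintro ⟨_ | ⟨⟨q', y'⟩, i⟩, h1, h2⟩ hbot
      · simp [MinIdx.hd] at h1
      · obtain rfl : q' = q := Nat.succ_injective h1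
        obtain rfl : y'.1 = y := h2
        refine (Module.Basis.ofVectorSpace K _).ne_zero i (Subtype.ext ?_)
        exact (Submodule.mem_bot K).1 (hbot ▸ Subtype.property _)
    · intro h
      have := Submodule.nontrivial_iff_ne_bot.2 h
      obtain ⟨i⟩ := (Module.Basis.ofVectorSpace K (newCycles K (minModel K L q) y)).index_nonempty
      exact ⟨Option.some ⟨(q, ⟨y, hy⟩), i⟩, rfl, rfl⟩

end Realization

section Comparison

lemma listBdrySingle_ofFn {L : Type*} {n : ℕ} (v : Fin (n + 1) → L) :
    listBdrySingle K (List.ofFn v) =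
      ∑ k : Fin (n + 1), (-1 : K) ^ (k : ℕ) • Finsupp.single (List.ofFn (v ∘ k.succAbove)) 1 := by
  induction n with
  | zero =>
    simp [listBdrySingle]
  | succ n ih =>
    have h := ih (fun i => v i.succ)
    conv_rhs => rw [Fin.sum_univ_succ]
    rw [List.ofFn_succ, listBdrySingle, h, map_sum, sub_eq_add_neg, ← Finset.sum_neg_distrib]
    congr 1
    · simp [Function.comp_def]
    · refine Finset.sum_congr rfl fun k _ => ?_
      rw [map_smul, listCone_single, Fin.val_succ, pow_succ, mul_neg_one, neg_smul]
      congr 3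
      rw [List.ofFn_succ]
      simp [Function.comp_def]

variable {P : Type} [Preorder P] {L : Type*} [PartialOrder L]

/-- Order chains of `P` as lists in `L`. -/
def chainToList (ψ : P ↪o L) {n : ℕ} (c : OChain P n) : List L := List.ofFn (ψ ∘ c.1)

lemma chainToList_injective (ψ : P ↪o L) (n : ℕ) :
    Function.Injective (chainToList ψ (n := n)) := by
  intro c c' h
  have h' := List.ofFn_injective h
  exact Subtype.ext (funext fun i => ψ.injective (congrFun h' i))

/-- The embedding of the order chains of `P` into combinations of lists in `L`. -/
def chainEmb (ψ : P ↪o L) (n : ℕ) : CGrp K P n →ₗ[K] (List L →₀ K) :=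
  Finsupp.lmapDomain K K (chainToList ψ)

lemma chainEmb_injective (ψ : P ↪o L) (n : ℕ) : Function.Injective (chainEmb K ψ n) :=
  Finsupp.mapDomain_injective (chainToList_injective ψ n)

@[simp] lemma chainEmb_single (ψ : P ↪o L) {n : ℕ} (c : OChain P n) :
    chainEmb K ψ n (Finsupp.single c 1) = Finsupp.single (chainToList ψ c) 1 :=
  Finsupp.mapDomain_single

lemma listBdry_chainEmb (ψ : P ↪o L) (n : ℕ) (c : CGrp K P (n + 1)) :
    listBdry K (chainEmb K ψ (n + 1) c) = chainEmb K ψ n (cbdry K P n c) := by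
  suffices listBdry K ∘ₗ chainEmb K ψ (n + 1) = chainEmb K ψ n ∘ₗ cbdry K P n from
    LinearMap.congr_fun this c
  refine Finsupp.lhom_ext' fun e => LinearMap.ext_ring ?_
  have h : cbdry K P n (Finsupp.single e 1) =
      ∑ k : Fin (n + 1), (-1 : K) ^ (k : ℕ) • Finsupp.single (odel P k e) 1 := by
    rw [cbdry, Finsupp.lsum_single, LinearMap.sum_apply]
    rfl
  have h' : listBdry K (Finsupp.single (chainToList ψ e) 1) =
      listBdrySingle K (chainToList ψ e) := by
    simp [listBdry]
  simp only [LinearMap.comp_apply, Finsupp.lsingle_apply, chainEmb_single, h, h', map_sum,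
    map_smul]
  exact listBdrySingle_ofFn K _

lemma mem_cyclesAt_iff (ψ : P ↪o L) (n : ℕ) (c : CGrp K P n) :
    c ∈ cyclesAt K P n ↔ listBdry K (chainEmb K ψ n c) = 0 := by
  cases n with
  | zero =>
    have h : listBdry K ∘ₗ chainEmb K ψ 0 = 0 := by
      refine Finsupp.lhom_ext' fun e => LinearMap.ext_ring ?_
      simp [chainEmb, chainToList, listBdry_nil]
    simpa [cyclesAt] using LinearMap.congr_fun h c
  | succ n =>
    rw [listBdry_chainEmb, cyclesAt, LinearMap.mem_ker]
    exact ((chainEmb_injective K ψ n).eq_iff' (map_zero _)).symm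

lemma boundariesIn_le_cyclesAt (ψ : P ↪o L) (n : ℕ) : boundariesIn K P n ≤ cyclesAt K P n := by
  rintro _ ⟨u, rfl⟩
  rw [mem_cyclesAt_iff K ψ, ← listBdry_chainEmb, listBdry_listBdry]

lemma finrank_sub_ne_zero_iff [Finite P] (ψ : P ↪o L) (n : ℕ) :
    Module.finrank K (cyclesAt K P n) - Module.finrank K (boundariesIn K P n) ≠ 0 ↔
      RHomNontrivial K P n := by
  have : Finite (OChain P n) := Subtype.finite
  rw [← Nat.pos_iff_ne_zero, Nat.sub_pos_iff_lt, RHomNontrivial]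
  constructor
  · intro h h'
    exact h.not_ge (Submodule.finrank_mono h')
  · intro h
    exact Submodule.finrank_lt_finrank_of_lt
      (lt_of_le_not_ge (boundariesIn_le_cyclesAt K ψ n) h)

variable [OrderBot L]

lemma range_chainToList (ψ : P ↪o L) {x : L} (hψ : Set.range ψ = Set.Ioo ⊥ x) (n : ℕ) :
    Set.range (chainToList ψ (n := n)) = chainLists (Set.Iio x) n := by
  have hψ' : ∀ p, ⊥ < ψ p ∧ ψ p < x := fun p => hψ.le ⟨p, rfl⟩
  ext l
  constructor
  · rintro ⟨c, rfl⟩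
    refine ⟨by simp [chainToList], ?_, ?_⟩
    · rw [chainToList, List.pairwise_ofFn]
      exact fun i j hij => ψ.strictMono (c.2 hij)
    · intro a ha
      rw [chainToList, List.mem_ofFn'] at ha
      obtain ⟨i, rfl⟩ := ha
      exact hψ' _
  · rintro ⟨rfl, h2, h3⟩
    have h4 : ∀ i : Fin l.length, ∃ p, ψ p = l.get i := fun i => hψ.ge (h3 _ (l.get_mem i))
    choose c hc using h4
    refine ⟨⟨c, fun i j hij => ψ.lt_iff_lt.1 ?_⟩, ?_⟩
    · rw [hc, hc]
      exact List.pairwise_iff_get.1 h2 i j hij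
    · have : ψ ∘ c = l.get := funext hc
      exact (congrArg List.ofFn this).trans l.ofFn_get

lemma range_chainEmb (ψ : P ↪o L) {x : L} (hψ : Set.range ψ = Set.Ioo ⊥ x) (n : ℕ) :
    LinearMap.range (chainEmb K ψ n) = chainsIn K (Set.Iio x) n := by
  rw [chainsIn, ← range_chainToList ψ hψ, ← Set.image_univ, ← Finsupp.lmapDomain_supported,
    Finsupp.supported_univ, Submodule.map_top, chainEmb]

lemma rHomNontrivial_iff_exists (ψ : P ↪o L) {x : L} (hψ : Set.range ψ = Set.Ioo ⊥ x) (n : ℕ) :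
    RHomNontrivial K P n ↔ ∃ z ∈ chainsIn K (Set.Iio x) n, listBdry K z = 0 ∧
      ∀ u ∈ chainsIn K (Set.Iio x) (n + 1), listBdry K u ≠ z := by
  rw [RHomNontrivial, SetLike.not_le_iff_exists, ← range_chainEmb K ψ hψ, ← range_chainEmb K ψ hψ]
  constructor
  · rintro ⟨c, hc, hc'⟩
    refine ⟨_, ⟨c, rfl⟩, (mem_cyclesAt_iff K ψ n c).1 hc, ?_⟩
    rintro _ ⟨u, rfl⟩ hu
    rw [listBdry_chainEmb] at hu
    exact hc' ⟨u, chainEmb_injective K ψ n hu⟩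
  · rintro ⟨_, ⟨c, rfl⟩, hc, hc'⟩
    refine ⟨c, (mem_cyclesAt_iff K ψ n c).2 hc, ?_⟩
    rintro ⟨u, rfl⟩
    exact hc' _ ⟨u, rfl⟩ (listBdry_chainEmb K ψ n u)

end Comparison

section Join

variable {L : Type*} [SemilatticeSup L] [OrderBot L] [Finite L]

/-- If the top element `x` carries a new cycle of degree `a + c + 1`, it is the join of elements
carrying new cycles of degrees `r` and `c`, for all `a ≤ r ≤ a + c + 1`. -/
theorem exists_newCycles_join {x : L} (hx : ⊥ < x) (htop : ∀ y, y ≤ x) {a c r : ℕ}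
    (h : newCycles K (minModel K L (a + c + 1)) x ≠ ⊥) (har : a ≤ r) (hr : r ≤ a + c + 1) :
    ∃ y z : L, ⊥ < y ∧ ⊥ < z ∧ newCycles K (minModel K L r) y ≠ ⊥ ∧
      newCycles K (minModel K L c) z ≠ ⊥ ∧ x ≤ y ⊔ z := by
  obtain ⟨F, hF⟩ := exists_minComplex (K := K) (L := L)
  obtain ⟨e₀, he₀, rfl⟩ := (hF _ x hx).2 h
  obtain ⟨e, f, he, hf, hef, hreach⟩ :=
    F.exists_join_eq_top htop (p := a + 1) (q := c + 1) (by simp) (by omega)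
  obtain ⟨e', he', hee'⟩ := hreach (r + 1) (by omega) (by omega)
  have h1 := F.bot_lt_deg e' (by omega)
  have h2 := F.bot_lt_deg f (by omega)
  exact ⟨_, _, h1, h2, (hF r _ h1).1 ⟨e', he', rfl⟩, (hF c _ h2).1 ⟨f, hf, rfl⟩,
    hef.trans (sup_le_sup_right hee' _)⟩

end Join

section Shifts

variable {nv : ℕ} (I : Ideal (PolyS K nv))

lemma finite_minGens : (minGens K nv I).Finite :=
  WellQuasiOrderedLE.finite_of_isAntichain fun _ hd _ hd' hne hle =>
    hd'.2 _ (lt_of_le_of_ne hle hne) hd.1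

lemma finite_lcmSet : (lcmSet K nv I).Finite := by
  refine ((finite_minGens K I).toFinset.powerset.finite_toSet.image fun B => B.sup id).subset ?_
  rintro m ⟨B, hB, rfl⟩
  exact ⟨B, by simpa using hB, rfl⟩

lemma zero_mem_lcmSet : 0 ∈ lcmSet K nv I := ⟨∅, by simp, rfl⟩

lemma sup_mem_lcmSet {a b : Fin nv → ℕ} (ha : a ∈ lcmSet K nv I) (hb : b ∈ lcmSet K nv I) :
    a ⊔ b ∈ lcmSet K nv I := by
  classical
  obtain ⟨A, hA, rfl⟩ := ha
  obtain ⟨B, hB, rfl⟩ := hb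
  exact ⟨A ∪ B, by simp [hA, hB], Finset.sup_union.symm⟩

lemma finite_openInt (m : Fin nv → ℕ) : Finite (openInt K nv I m) :=
  ((finite_lcmSet K I).subset fun _ h => h.1).to_subtype

lemma multiBetti_succ_ne_zero_iff (q : ℕ) (m : Fin nv → ℕ) : multiBetti K nv I (q + 1) m ≠ 0 ↔
    (m ∈ lcmSet K nv I ∧ m ≠ 0) ∧ RHomNontrivial K (openInt K nv I m) q := by
  have := finite_openInt K I m
  have h := finrank_sub_ne_zero_iff K (OrderEmbedding.subtype (· ∈ openInt K nv I m)) q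
  rw [multiBetti, if_neg q.succ_ne_zero]
  split_ifs with hm
  · simpa [hm] using h
  · simp [hm]

lemma multiBetti_zero_ne_zero_iff (m : Fin nv → ℕ) : multiBetti K nv I 0 m ≠ 0 ↔ m = 0 := by
  simp [multiBetti]

lemma mem_lcmSet_of_multiBetti_ne_zero {i : ℕ} {m : Fin nv → ℕ}
    (h : multiBetti K nv I i m ≠ 0) : m ∈ lcmSet K nv I := by
  cases i with
  | zero =>
    rw [(multiBetti_zero_ne_zero_iff K I m).1 h]
    exact zero_mem_lcmSet K I
  | succ q => exact ((multiBetti_succ_ne_zero_iff K I q m).1 h).1.1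

lemma betti_ne_zero_iff (i j : ℕ) :
    betti K nv I i j ≠ 0 ↔ ∃ m, degTot nv m = j ∧ multiBetti K nv I i m ≠ 0 := by
  have hfin : {m : Fin nv → ℕ | degTot nv m = j}.Finite := by
    refine (Set.finite_Icc (0 : Fin nv → ℕ) fun _ => j).subset fun m hm => ⟨zero_le, fun r => ?_⟩
    rw [← show degTot nv m = j from hm]
    exact Finset.single_le_sum (fun _ _ => Nat.zero_le _) (Finset.mem_univ r)
  rw [betti, finsum_mem_eq_finite_toFinset_sum _ hfin, Ne, Finset.sum_eq_zero_iff]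
  simp

lemma degTot_le_tshift {i : ℕ} {m : Fin nv → ℕ} (h : multiBetti K nv I i m ≠ 0) :
    degTot nv m ≤ tshift K nv I i := by
  refine le_csSup (Set.Finite.bddAbove ?_) ((betti_ne_zero_iff K I i _).2 ⟨m, rfl, h⟩)
  refine ((finite_lcmSet K I).image (degTot nv)).subset fun j hj => ?_
  obtain ⟨m, rfl, hm⟩ := (betti_ne_zero_iff K I i j).1 hj
  exact ⟨m, mem_lcmSet_of_multiBetti_ne_zero K I hm, rfl⟩

lemma tshift_le {i b : ℕ} (h : ∀ m, multiBetti K nv I i m ≠ 0 → degTot nv m ≤ b) :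
    tshift K nv I i ≤ b := by
  refine csSup_le' fun j hj => ?_
  obtain ⟨m, rfl, hm⟩ := (betti_ne_zero_iff K I i j).1 hj
  exact h m hm

lemma degTot_le_add {m a b : Fin nv → ℕ} (h : m ≤ a ⊔ b) :
    degTot nv m ≤ degTot nv a + degTot nv b := by
  rw [degTot, degTot, degTot, ← Finset.sum_add_distrib]
  exact Finset.sum_le_sum fun r _ => (h r).trans (sup_le (Nat.le_add_right _ _)
    (Nat.le_add_left _ _))

/-- A multidegree of a nonzero Betti number in degree `a + c + 2` is bounded by the join of
multidegrees of nonzero Betti numbers in degrees `r + 1` and `c + 1`, for all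
`a ≤ r ≤ a + c + 1`. -/
theorem exists_multiBetti_join {m : Fin nv → ℕ} {a c r : ℕ}
    (hm : multiBetti K nv I (a + c + 2) m ≠ 0) (har : a ≤ r) (hr : r ≤ a + c + 1) :
    ∃ y z, multiBetti K nv I (r + 1) y ≠ 0 ∧ multiBetti K nv I (c + 1) z ≠ 0 ∧ m ≤ y ⊔ z := by
  let L : Type := {p : Fin nv → ℕ // p ∈ lcmSet K nv I ∧ p ≤ m}
  let _ : SemilatticeSup L := Subtype.semilatticeSup fun _ _ hx hy =>
    ⟨sup_mem_lcmSet K I hx.1 hy.1, sup_le hx.2 hy.2⟩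
  let _ : OrderBot L := Subtype.orderBot ⟨zero_mem_lcmSet K I, bot_le⟩
  have : Finite L := ((finite_lcmSet K I).subset fun _ h => h.1).to_subtype
  have hbot : ∀ y : L, ⊥ < y ↔ y.1 ≠ 0 := fun y => by
    rw [bot_lt_iff_ne_bot, Ne, Subtype.ext_iff]
    rfl
  have key : ∀ (q : ℕ) (y : L), ⊥ < y →
      (multiBetti K nv I (q + 1) y.1 ≠ 0 ↔ newCycles K (minModel K L q) y ≠ ⊥) := by
    intro q y hy
    let ψ : openInt K nv I y.1 ↪o L :=
      OrderEmbedding.ofMapLEIff (fun p => (⟨p.1, p.2.1, p.2.2.2.le.trans y.2.2⟩ : L))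
        fun _ _ => Iff.rfl
    have hψ : Set.range ψ = Set.Ioo ⊥ y := by
      ext p
      constructor
      · rintro ⟨p, rfl⟩
        exact ⟨(hbot _).2 p.2.2.1.ne', p.2.2.2⟩
      · rintro ⟨h1, h2⟩
        exact ⟨⟨p.1, p.2.1, pos_iff_ne_zero.2 ((hbot p).1 h1), h2⟩, rfl⟩
    rw [multiBetti_succ_ne_zero_iff, rHomNontrivial_iff_exists K ψ hψ, newCycles_ne_bot_iff,
      and_iff_right ⟨y.2.1, (hbot y).1 hy⟩]
  have hmL := (multiBetti_succ_ne_zero_iff K I _ m).1 hm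
  let x : L := ⟨m, hmL.1.1, le_rfl⟩
  have hx : ⊥ < x := (hbot x).2 hmL.1.2
  obtain ⟨y, z, hy, hz, hy', hz', hle⟩ := exists_newCycles_join K hx (fun y => y.2.2)
    ((key _ x hx).1 hm) har hr
  exact ⟨y.1, z.1, (key r y hy).2 hy', (key c z hz).2 hz', hle⟩

end Shifts

/-- **generalized subadditivity.**  Let `I` be a monomial ideal in
`S = K[x₁, …, xₙ]`.  Then for all `i₁, i₂ ≥ 0` and `0 ≤ k ≤ min{i₁, i₂}` one has
`t_{i₁+i₂-k}(S/I) ≤ t_{i₁}(S/I) + t_{i₂}(S/I)`. -/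
theorem maximal_shifts_k_subadditive (nv : ℕ) (I : Ideal (PolyS K nv))
    (hI : IsMonomialIdeal K nv I) (i₁ i₂ k : ℕ) (hk : k ≤ min i₁ i₂) :
    tshift K nv I (i₁ + i₂ - k) ≤ tshift K nv I i₁ + tshift K nv I i₂ := by
  obtain ⟨h₁, h₂⟩ := le_min_iff.1 hk
  rcases h₁.eq_or_lt with rfl | h₁
  · rw [Nat.add_sub_cancel_left]
    exact Nat.le_add_left _ _
  rcases h₂.eq_or_lt with rfl | h₂
  · rw [Nat.add_sub_cancel]
    exact Nat.le_add_right _ _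
  obtain ⟨a, ha⟩ : ∃ a, i₁ = k + a + 1 := Nat.exists_eq_add_of_lt h₁
  obtain ⟨c, rfl⟩ : ∃ c, i₂ = c + 1 := Nat.exists_eq_add_one.2 (by omega)
  subst ha
  rw [show k + a + 1 + (c + 1) - k = a + c + 2 by omega]
  refine tshift_le K I fun m hm => ?_
  obtain ⟨y, z, hy, hz, hle⟩ := exists_multiBetti_join K I (r := k + a) hm (by omega) (by omega)
  exact (degTot_le_add hle).trans (add_le_add (degTot_le_tshift K I hy) (degTot_le_tshift K I hz))

end
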